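/- Let q ≠ 0 and η be two finite complex numbers, and let a₁ ≠ b₁ be complex numbers. There is no non-constant entire function f : ℂ → ℂ of zero order such that f(z) and Δ_{q,η}f(z) share the pairs (a₁, −a₁) and (b₁, −b₁) IM. -/

import Mathlib

/-!
Put `F = f` and `H z = f z - f (q z + η)`. The hypotheses say that `F` and `H` share the values
`a = a₁` and `b = b₁` ignoring multiplicities. If `F = H`, then `f (q z + η) = 0` for all `z`, so
`f = 0` is constant. It remains to exclude `F ≠ H`.

*Scales.* Since `f` is not constant and has zero order, there are arbitrarily large `s` for which
`log M (A s) ≤ (1 + ε) log M s` (`exists_regular_scale`); write `L = log M s`. With `A` large in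
terms of `q` and `η`, both `F` and `H` are bounded by about `exp L` on `|z| ≤ 32 s`. At such a scale
a minimum modulus principle (`exists_min_modulus`) turns largeness at one point into largeness on a
whole circle.

*`H` is not small.* The function `ψ = F' (F - H) / ((F - a) (F - b))` is entire, because `F = H` at
the zeros of the denominator. If `|H|` were much smaller than `exp L` on `|z| ≤ 2 s`, then
`F' / (F - a)` would be very close to `ψ` on a circle, so that `F - a` would have no zeros inside;
but it is small at `0` and large on the circle (`not_small`).

*`F` and `H` of comparable size.* At every common `a`- or `b`-point with multiplicities `(p, r)`,
suitable products of `F'` and of the functions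
`(F - H) (F' (H - a) (H - b) - m H' (F - a) (F - b))` (and the same with `F`, `H` exchanged), for
`1 ≤ m ≤ 8`, vanish to at least the order of
`((F - a) (F - b)) ^ 135 ((H - a) (H - b)) ^ 127`. So the quotient `highProd / lowProd` is entire.
The numerator has degree `520` and the denominator degree `524`, so at regular scales the quotient
is of size about `exp (-4 L)` on a circle, whence it is identically zero. Since none of the factors
of the numerator vanishes identically (`auxNum_ne_zero`), this is a contradiction (`eq_of_scales`).
-/


open Filter Topology

/-- `log⁺ x = max 0 (log x)`. -/
noncomputable def logPlus (x : ℝ) : ℝ := max 0 (Real.log x)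

/-- The maximum modulus of `f` on the circle `|z| = r`. -/
noncomputable def maxMod (f : ℂ → ℂ) (r : ℝ) : ℝ :=
  sSup ((fun z => ‖f z‖) '' Metric.sphere (0 : ℂ) r)

/-- `f` is an entire function of zero order:
`limsup_{r→∞} (log⁺ log⁺ M(r,f)) / log r = 0`. -/
def ZeroOrderEntire (f : ℂ → ℂ) : Prop :=
  Differentiable ℂ f ∧
    Filter.limsup
      (fun r : ℝ => ((logPlus (logPlus (maxMod f r)) / Real.log r : ℝ) : EReal))
      Filter.atTop = 0

/-! ### A minimum modulus principle -/

/-- A monic real polynomial of degree `n` attains absolute value at least `(s / 4) ^ n` on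
`[s, 2 s]`. After rescaling to `[-1, 1]` this is Chebyshev's bound on the leading coefficient. -/
theorem exists_large_prod (Z : Multiset ℝ) {s : ℝ} (hs : 0 < s) :
    ∃ t ∈ Set.Icc s (2 * s), (s / 4) ^ Z.card ≤ (Z.map fun x => |t - x|).prod := by
  rcases Nat.eq_zero_or_pos Z.card with h0 | hn
  · refine ⟨s, ⟨le_rfl, by linarith⟩, ?_⟩
    rw [Multiset.card_eq_zero] at h0
    simp [h0]
  by_contra! hcon
  set n := Z.card with hndef
  set Q : Polynomial ℝ := Polynomial.C (((s / 4) ^ n)⁻¹) *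
    (Z.map fun x => Polynomial.C (s / 2) * Polynomial.X + Polynomial.C (3 * s / 2 - x)).prod with hQ
  have hdeg1 : ∀ x : ℝ, (Polynomial.C (s / 2) * Polynomial.X + Polynomial.C (3 * s / 2 - x)).natDegree = 1 :=
    fun x => Polynomial.natDegree_linear (by positivity)
  have hlc1 : ∀ x : ℝ, (Polynomial.C (s / 2) * Polynomial.X + Polynomial.C (3 * s / 2 - x)).leadingCoeff = s / 2 :=
    fun x => Polynomial.leadingCoeff_linear (by positivity)
  have hlc : Q.leadingCoeff = 2 ^ n := by
    rw [hQ, Polynomial.leadingCoeff_mul, Polynomial.leadingCoeff_multiset_prod,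
      Polynomial.leadingCoeff_C, Multiset.map_map]
    simp only [Function.comp_def, hlc1, Multiset.map_const', Multiset.prod_replicate, ← hndef]
    rw [← inv_pow, ← mul_pow]
    congr 1
    field_simp
    norm_num
  have hdeg : Q.degree ≤ n := by
    apply Polynomial.degree_le_of_natDegree_le
    refine (Polynomial.natDegree_C_mul_le _ _).trans ?_
    refine (Polynomial.natDegree_multiset_prod_le _).trans ?_
    rw [Multiset.map_map]
    simp only [Function.comp_def, hdeg1, Multiset.map_const', Multiset.sum_replicate, ← hndef]
    simp
  have hb : ∀ y ∈ Set.Icc (-1 : ℝ) 1, |Q.eval y| ≤ 1 := by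
    intro y hy
    have := hcon (s / 2 * y + 3 * s / 2) ⟨by nlinarith [hy.1], by nlinarith [hy.2]⟩
    rw [hQ, Polynomial.eval_mul, Polynomial.eval_C, Polynomial.eval_multiset_prod, Multiset.map_map,
      abs_mul, abs_inv, abs_of_pos (by positivity : 0 < (s / 4) ^ n)]
    have h2 : |(Multiset.map (Polynomial.eval y ∘ fun x => Polynomial.C (s / 2) * Polynomial.X + Polynomial.C (3 * s / 2 - x)) Z).prod|
       = (Z.map fun x => |(s / 2 * y + 3 * s / 2) - x|).prod := by
      refine (map_multiset_prod (absHom : ℝ →*₀ ℝ) _).trans ?_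
      rw [Multiset.map_map]
      congr 1
      apply Multiset.map_congr rfl
      intro x _
      change |Polynomial.eval y _| = _
      simp only [Polynomial.eval_add, Polynomial.eval_mul, Polynomial.eval_C, Polynomial.eval_X]
      congr 1
      ring
    rw [h2, inv_mul_le_iff₀ (by positivity), mul_one]
    exact this.le
  have := Polynomial.Chebyshev.leadingCoeff_le_of_forall_abs_le_one hdeg hb
  rw [hlc] at this
  have h3 := (pow_le_pow_iff_right₀ (by norm_num : (1:ℝ) < 2)).1 this
  omega

/-- Zeros of `u` in `|z| ≤ 5 s` are divided out one by one through Blaschke factors of the disc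
of radius `8 s`. Each division keeps the bound `E` and multiplies the value at `z₀` by at least
`6 / 5`, so the procedure stops before `n` steps. The multiset `Z` collects the moduli of the
zeros removed, and `k` is the zero-free remainder. -/
theorem peel_zeros {s : ℝ} (hs : 0 < s) {E : ℝ} {z₀ : ℂ} (hz₀ : ‖z₀‖ ≤ s) (n : ℕ) :
    ∀ u : ℂ → ℂ, Differentiable ℂ u → (∀ z, ‖z‖ ≤ 8 * s → ‖u z‖ ≤ E) →
      E < ‖u z₀‖ * (6 / 5) ^ n →
      ∃ (Z : Multiset ℝ) (k : ℂ → ℂ), Differentiable ℂ k ∧ (∀ z, ‖z‖ ≤ 5 * s → k z ≠ 0) ∧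
        (∀ z, ‖z‖ ≤ 8 * s → ‖k z‖ ≤ E) ∧ ‖u z₀‖ * (6 / 5) ^ Z.card ≤ ‖k z₀‖ ∧
        ∀ z, ‖z‖ ≤ 2 * s → ‖k z‖ * (Z.map fun x => |‖z‖ - x| / (16 * s)).prod ≤ ‖u z‖ := by
  induction n with
  | zero =>
    intro u _ hE h
    have := hE z₀ (by linarith)
    simp at h
    linarith
  | succ n ih =>
    intro u hu hE h
    by_cases hzero : ∀ z, ‖z‖ ≤ 5 * s → u z ≠ 0
    · exact ⟨0, u, hu, hzero, hE, by simp, by simp⟩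
    push Not at hzero
    obtain ⟨a, ha, hua⟩ := hzero
    -- the quotient of `u` by the Blaschke factor `R (z - a) / (R² - ā z)`, where `R = 8 s`
    set k : ℂ → ℂ := fun z => dslope u a z * ((8 * s) ^ 2 - star a * z) / (8 * s) with hk
    have hkd : Differentiable ℂ k := by
      have : Differentiable ℂ (dslope u a) := by
        rw [← differentiableOn_univ] at hu ⊢
        exact (Complex.differentiableOn_dslope univ_mem).2 hu
      fun_prop
    have hsc : (s : ℂ) ≠ 0 := by exact_mod_cast hs.ne'
    have hfac : ∀ z, u z * ((8 * s) ^ 2 - star a * z) = k z * (8 * s * (z - a)) := by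
      intro z
      have := sub_smul_dslope u a z
      rw [hua, sub_zero, smul_eq_mul] at this
      rw [hk, ← this]
      field_simp
    have hfacn : ∀ z, ‖u z‖ * ‖((8 * s) ^ 2 - star a * z : ℂ)‖ = ‖k z‖ * (8 * s * ‖z - a‖) := by
      intro z
      have := congrArg norm (hfac z)
      simpa [norm_mul, abs_of_pos hs] using this
    have hn1 : ∀ z, ‖z‖ = 8 * s → ‖((8 * s) ^ 2 - star a * z : ℂ)‖ = 8 * s * ‖z - a‖ := by
      intro z hz
      have h1 : ((8 * s) ^ 2 : ℂ) = star z * z := by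
        have := Complex.conj_mul' z
        rw [hz] at this
        simp only [Complex.star_def, this]
        push_cast
        ring
      rw [h1, ← sub_mul, norm_mul, hz, ← star_sub, norm_star, mul_comm]
    have hkE : ∀ z, ‖z‖ ≤ 8 * s → ‖k z‖ ≤ E := by
      intro z hz
      refine Complex.norm_le_of_forall_mem_frontier_norm_le (U := Metric.ball 0 (8 * s))
        Metric.isBounded_ball hkd.diffContOnCl ?_ ?_
      · intro w hw
        rw [frontier_ball _ (by positivity), mem_sphere_zero_iff_norm] at hw
        have h1 := hfacn w
        rw [hn1 w hw] at h1
        have h2 : 0 < 8 * s * ‖w - a‖ := by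
          have : 0 < ‖w - a‖ := by
            have := norm_sub_norm_le w a
            linarith
          positivity
        rw [← mul_right_cancel₀ h2.ne' h1]
        exact hE w hw.le
      · rw [closure_ball _ (by positivity)]
        simpa using hz
    have hk0 : ‖u z₀‖ * (6 / 5) ≤ ‖k z₀‖ := by
      have h1 := hfacn z₀
      have h2 : ‖z₀ - a‖ ≤ 6 * s := (norm_sub_le _ _).trans (by linarith)
      have h3 : 59 * s ^ 2 ≤ ‖((8 * s) ^ 2 - star a * z₀ : ℂ)‖ := by
        have := norm_sub_norm_le ((8 * s) ^ 2 : ℂ) (star a * z₀)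
        have h4 : ‖star a * z₀‖ ≤ 5 * s * s := by
          rw [norm_mul, norm_star]; gcongr
        have h5 : ‖((8 * s) ^ 2 : ℂ)‖ = 64 * s ^ 2 := by
          simp [abs_of_pos hs]; ring
        nlinarith
      have h6 : ‖u z₀‖ * (59 * s ^ 2) ≤ ‖k z₀‖ * (8 * s * (6 * s)) := by
        calc _ ≤ ‖u z₀‖ * ‖((8 * s) ^ 2 - star a * z₀ : ℂ)‖ := by gcongr
          _ = _ := h1
          _ ≤ _ := by gcongr
      have h7 : ‖u z₀‖ * 59 ≤ ‖k z₀‖ * 48 := by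
        have : 0 < s ^ 2 := by positivity
        nlinarith
      linarith [norm_nonneg (u z₀), norm_nonneg (k z₀)]
    have hk2 : ∀ z, ‖z‖ ≤ 2 * s → ‖k z‖ * (|‖z‖ - ‖a‖| / (16 * s)) ≤ ‖u z‖ := by
      intro z hz
      have h1 := hfacn z
      have h2 : |‖z‖ - ‖a‖| ≤ ‖z - a‖ := abs_norm_sub_norm_le z a
      have h3 : ‖((8 * s) ^ 2 - star a * z : ℂ)‖ ≤ 128 * s ^ 2 := by
        have := norm_sub_le ((8 * s) ^ 2 : ℂ) (star a * z)
        have h4 : ‖star a * z‖ ≤ 5 * s * (2 * s) := by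
          rw [norm_mul, norm_star]; gcongr
        have h5 : ‖((8 * s) ^ 2 : ℂ)‖ = 64 * s ^ 2 := by
          simp [abs_of_pos hs]; ring
        nlinarith
      have h6 : ‖k z‖ * (8 * s * |‖z‖ - ‖a‖|) ≤ ‖u z‖ * (128 * s ^ 2) := by
        calc _ ≤ ‖k z‖ * (8 * s * ‖z - a‖) := by gcongr
          _ = _ := h1.symm
          _ ≤ _ := by gcongr
      rw [← mul_div_assoc, div_le_iff₀ (by positivity)]
      have : 0 < s := hs
      nlinarith
    obtain ⟨Z, k', hk'd, hk'0, hk'E, hk'z, hk'u⟩ := ih k hkd hkE (by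
      calc E < ‖u z₀‖ * (6 / 5) ^ (n + 1) := h
        _ = ‖u z₀‖ * (6 / 5) * (6 / 5) ^ n := by ring
        _ ≤ _ := by gcongr)
    refine ⟨‖a‖ ::ₘ Z, k', hk'd, hk'0, hk'E, ?_, ?_⟩
    · calc _ = ‖u z₀‖ * (6 / 5) * (6 / 5) ^ Z.card := by rw [Multiset.card_cons]; ring
        _ ≤ ‖k z₀‖ * (6 / 5) ^ Z.card := by gcongr
        _ ≤ _ := hk'z
    · intro z hz
      rw [Multiset.map_cons, Multiset.prod_cons]
      calc _ = (‖k' z‖ * (Z.map fun x => |‖z‖ - x| / (16 * s)).prod) * (|‖z‖ - ‖a‖| / (16 * s)) := by ring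
        _ ≤ ‖k z‖ * (|‖z‖ - ‖a‖| / (16 * s)) := by gcongr; exact hk'u z hz
        _ ≤ _ := hk2 z hz

/-- A Harnack-type inequality for a function without zeros in `|z| ≤ 5 s`: the
Borel–Carathéodory theorem is applied to a logarithm of `k / k z₀` on the disc of radius `4 s`
centred at `z₀`. -/
theorem harnack_zero_free {s : ℝ} (hs : 0 < s) {B κ : ℝ} (hκ : 0 < κ) {z₀ : ℂ} (hz₀ : ‖z₀‖ ≤ s)
    {k : ℂ → ℂ} (hk : Differentiable ℂ k) (hk0 : ∀ z, ‖z‖ ≤ 5 * s → k z ≠ 0)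
    (hkB : ∀ z, ‖z‖ ≤ 8 * s → ‖k z‖ ≤ Real.exp B) (hkz : Real.exp (B - κ) ≤ ‖k z₀‖)
    {z : ℂ} (hz : ‖z‖ ≤ 2 * s) : Real.exp (B - 7 * κ) ≤ ‖k z‖ := by
  have hsub : ∀ w ∈ Metric.ball (0 : ℂ) (4 * s), ‖w + z₀‖ ≤ 5 * s := by
    intro w hw
    rw [mem_ball_zero_iff] at hw
    exact (norm_add_le _ _).trans (by linarith)
  set K : ℂ → ℂ := fun w => k (w + z₀) with hK
  have hKd : Differentiable ℂ K := by fun_prop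
  have hd : DifferentiableOn ℂ (fun w => deriv K w / K w) (Metric.ball 0 (4 * s)) := by
    refine DifferentiableOn.div ?_ hKd.differentiableOn (fun w hw => hk0 _ (hsub w hw))
    exact (hKd.deriv).differentiableOn
  obtain ⟨φ, hφ⟩ := hd.isExactOn_ball.with_val_at 0 0
  obtain ⟨hφ0, hφ⟩ := hφ
  have hexp : ∀ w ∈ Metric.ball (0 : ℂ) (4 * s), K w = K 0 * Complex.exp (φ w) := by
    have hconst : ∀ w ∈ Metric.ball (0 : ℂ) (4 * s), K w * Complex.exp (-φ w) = K 0 * Complex.exp (-φ 0) := by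
      intro w hw
      refine Metric.isOpen_ball.is_const_of_deriv_eq_zero (convex_ball (0:ℂ) (4*s)).isPreconnected
        (f := fun w => K w * Complex.exp (-φ w)) ?_ ?_ hw (Metric.mem_ball_self (by positivity))
      · intro x hx
        exact ((hKd x).mul (hφ x hx).differentiableAt.neg.cexp).differentiableWithinAt
      · intro x hx
        have h1 := (hKd x).hasDerivAt.mul (hφ x hx).neg.cexp
        have : K x ≠ 0 := hk0 _ (hsub x hx)
        refine (h1.deriv).trans ?_
        simp only [Pi.zero_apply]
        field_simp
        simp
    intro w hw
    have := hconst w hw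
    rw [hφ0, neg_zero, Complex.exp_zero, mul_one] at this
    rw [← this, mul_assoc, ← Complex.exp_add]
    simp
  have hK0 : K 0 = k z₀ := by simp [hK]
  have hre : Set.MapsTo φ (Metric.ball 0 (4 * s)) {z | z.re ≤ κ} := by
    intro w hw
    have h1 := congrArg norm (hexp w hw)
    rw [norm_mul, Complex.norm_exp, hK0] at h1
    have h2 := hkB (w + z₀) ((hsub w hw).trans (by linarith))
    change ‖K w‖ ≤ _ at h2
    rw [h1] at h2
    have h3 : Real.exp (B - κ) * Real.exp (φ w).re ≤ Real.exp B :=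
      le_trans (by gcongr) h2
    rw [← Real.exp_add, Real.exp_le_exp] at h3
    show (φ w).re ≤ κ
    linarith
  have hw : ‖z - z₀‖ ≤ 3 * s := (norm_sub_le _ _).trans (by linarith)
  have hwb : z - z₀ ∈ Metric.ball (0 : ℂ) (4 * s) := by
    rw [mem_ball_zero_iff]; linarith
  have hbc := Complex.borelCaratheodory_zero hκ
    (fun w hw => (hφ w hw).differentiableAt.differentiableWithinAt) hre (by positivity) hwb hφ0
  have h6 : ‖φ (z - z₀)‖ ≤ 6 * κ := by
    refine hbc.trans ?_
    rw [div_le_iff₀ (by linarith)]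
    nlinarith
  have h7 := congrArg norm (hexp _ hwb)
  rw [norm_mul, Complex.norm_exp, hK0] at h7
  simp only [hK, sub_add_cancel] at h7
  rw [h7]
  calc Real.exp (B - 7 * κ) = Real.exp (B - κ) * Real.exp (-(6 * κ)) := by rw [← Real.exp_add]; ring_nf
    _ ≤ _ := by
      gcongr
      linarith [neg_le_of_abs_le ((Complex.abs_re_le_norm (φ (z - z₀))).trans h6)]

/-- Minimum modulus principle. If `|u| ≤ exp B` on `|z| ≤ 8 s` and `|u|` is at least
`exp (B - κ)` at some point of `|z| ≤ s`, then `|u| ≥ exp (B - 30 κ)` on a whole circle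
`|z| = t` with `s ≤ t ≤ 2 s`. -/
theorem exists_min_modulus {s : ℝ} (hs : 0 < s) {B κ : ℝ} (hκ : 0 < κ) {z₀ : ℂ} (hz₀ : ‖z₀‖ ≤ s)
    {u : ℂ → ℂ} (hu : Differentiable ℂ u)
    (huB : ∀ z, ‖z‖ ≤ 8 * s → ‖u z‖ ≤ Real.exp B) (huz : Real.exp (B - κ) ≤ ‖u z₀‖) :
    ∃ t, s ≤ t ∧ t ≤ 2 * s ∧ ∀ z, ‖z‖ = t → Real.exp (B - 30 * κ) ≤ ‖u z‖ := by
  have hpos : 0 < ‖u z₀‖ := (Real.exp_pos _).trans_le huz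
  obtain ⟨n, hn⟩ := pow_unbounded_of_one_lt (Real.exp B / ‖u z₀‖) (by norm_num : (1:ℝ) < 6 / 5)
  obtain ⟨Z, k, hkd, hk0, hkB, hkz, hku⟩ := peel_zeros hs hz₀ n u hu huB
    (by rw [div_lt_iff₀ hpos] at hn; linarith)
  have hZ : ((6:ℝ) / 5) ^ Z.card ≤ Real.exp κ := by
    have h1 := hkz.trans (hkB z₀ (by linarith))
    have h2 : Real.exp (B - κ) * (6 / 5) ^ Z.card ≤ Real.exp B := le_trans (by gcongr) h1
    rw [Real.exp_sub, div_mul_eq_mul_div, div_le_iff₀ (Real.exp_pos _)] at h2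
    exact le_of_mul_le_mul_left h2 (Real.exp_pos _)
  have hkz' : Real.exp (B - κ) ≤ ‖k z₀‖ := by
    refine huz.trans (le_trans ?_ hkz)
    exact le_mul_of_one_le_right hpos.le (one_le_pow₀ (by norm_num))
  obtain ⟨t, ht, hprod⟩ := exists_large_prod Z hs
  refine ⟨t, ht.1, ht.2, fun z hz => ?_⟩
  have hk7 := harnack_zero_free hs hκ hz₀ hkd hk0 hkB hkz' (z := z) (by rw [hz]; exact ht.2)
  have h23 : Real.exp (-(23 * κ)) ≤ (Z.map fun x => |‖z‖ - x| / (16 * s)).prod := by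
    rw [hz, Multiset.prod_map_div, Multiset.map_const', Multiset.prod_replicate]
    calc Real.exp (-(23 * κ)) = (Real.exp κ ^ 23)⁻¹ := by
          rw [← Real.exp_nat_mul, ← Real.exp_neg]; norm_num
      _ ≤ ((((6:ℝ) / 5) ^ Z.card) ^ 23)⁻¹ := by gcongr
      _ = (((5:ℝ) / 6) ^ 23) ^ Z.card := by
          rw [← pow_mul, ← pow_mul, mul_comm, ← inv_pow]; norm_num
      _ ≤ ((1:ℝ) / 64) ^ Z.card := by
          gcongr; norm_num
      _ = (s / 4) ^ Z.card / (16 * s) ^ Z.card := by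
          rw [← div_pow]; congr 1; field_simp; norm_num
      _ ≤ _ := by gcongr
  calc Real.exp (B - 30 * κ) = Real.exp (B - 7 * κ) * Real.exp (-(23 * κ)) := by
        rw [← Real.exp_add]; ring_nf
    _ ≤ ‖k z‖ * (Z.map fun x => |‖z‖ - x| / (16 * s)).prod := by gcongr
    _ ≤ _ := hku z (by rw [hz]; exact ht.2)

/-! ### Zeros and quotients of entire functions -/

/-- The minimum principle: an entire function that is larger on `|z| = t` than at `0` vanishes inside. -/
theorem exists_zero_in_ball {u : ℂ → ℂ} (hu : Differentiable ℂ u) {t m : ℝ} (ht : 0 < t)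
    (hm : ∀ z, ‖z‖ = t → m ≤ ‖u z‖) (h0 : ‖u 0‖ < m) : ∃ z, ‖z‖ < t ∧ u z = 0 := by
  by_contra! hne
  have hmpos : 0 < m := (norm_nonneg _).trans_lt h0
  have hne' : ∀ z, ‖z‖ ≤ t → u z ≠ 0 := by
    intro z hz
    rcases hz.lt_or_eq with h | h
    · exact hne z h
    · exact norm_pos_iff.1 (hmpos.trans_le (hm z h))
  have hd : DiffContOnCl ℂ (fun z => (u z)⁻¹) (Metric.ball 0 t) := by
    apply DifferentiableOn.diffContOnCl
    rw [closure_ball _ ht.ne']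
    intro z hz
    exact ((hu z).inv (hne' z (by simpa using hz))).differentiableWithinAt
  have h := Complex.norm_le_of_forall_mem_frontier_norm_le (C := m⁻¹) Metric.isBounded_ball hd
    (fun z hz => by
      rw [frontier_ball _ ht.ne', mem_sphere_zero_iff_norm] at hz
      rw [norm_inv]
      exact inv_anti₀ hmpos (hm z hz)) (z := 0) (subset_closure (Metric.mem_ball_self ht))
  rw [norm_inv, inv_le_inv₀ (norm_pos_iff.2 (hne' 0 (by simpa using ht.le))) hmpos] at h
  linarith

/-- If `u' / u` is within `τ` of an entire function `ψ` on `|z| = t` and `2 π t τ < 1`, then `u` has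
no zero in `|z| < t`. With `G' = ψ`, the entire function `k = u exp (-G)` satisfies `|k'| ≤ τ max |k|` on the
circle, so it varies there by less than its maximal modulus and cannot vanish inside. -/
theorem no_zero_of_log_deriv_close {u ψ : ℂ → ℂ} (hu : Differentiable ℂ u)
    (hψ : Differentiable ℂ ψ) {t τ : ℝ} (ht : 0 < t) (hτ : 0 ≤ τ) (hτt : 2 * Real.pi * (t * τ) < 1)
    (hne : ∀ z, ‖z‖ = t → u z ≠ 0)
    (hclose : ∀ z, ‖z‖ = t → ‖deriv u z - u z * ψ z‖ ≤ τ * ‖u z‖) :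
    ∀ z, ‖z‖ < t → u z ≠ 0 := by
  obtain ⟨G, hG⟩ := hψ.isExactOn_univ
  have hG' : ∀ z, HasDerivAt G (ψ z) z := fun z => hG z (Set.mem_univ z)
  set k : ℂ → ℂ := fun z => u z * Complex.exp (-G z) with hk
  have hkd : ∀ z, HasDerivAt k ((deriv u z - u z * ψ z) * Complex.exp (-G z)) z := by
    intro z
    convert! (hu z).hasDerivAt.mul (hG' z).neg.cexp using 1
    simp only [Pi.neg_apply]
    ring
  have hkD : Differentiable ℂ k := fun z => (hkd z).differentiableAt
  obtain ⟨z₁, hz₁, hmax⟩ := Complex.exists_mem_frontier_isMaxOn_norm (f := k)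
    (Metric.isBounded_ball (x := 0) (r := t)) ⟨0, Metric.mem_ball_self ht⟩ hkD.diffContOnCl
  rw [frontier_ball _ ht.ne', mem_sphere_zero_iff_norm] at hz₁
  have hk1 : 0 < ‖k z₁‖ := norm_pos_iff.2 (mul_ne_zero (hne z₁ hz₁) (Complex.exp_ne_zero _))
  have hbd : ∀ z, ‖z‖ = t → ‖(deriv u z - u z * ψ z) * Complex.exp (-G z)‖ ≤ τ * ‖k z₁‖ := by
    intro z hz
    have h1 : ‖k z‖ ≤ ‖k z₁‖ := hmax (by
      rw [closure_ball _ ht.ne']; simp [hz])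
    calc _ = ‖deriv u z - u z * ψ z‖ * ‖Complex.exp (-G z)‖ := norm_mul _ _
      _ ≤ τ * ‖u z‖ * ‖Complex.exp (-G z)‖ := by gcongr; exact hclose z hz
      _ = τ * ‖k z‖ := by rw [hk, norm_mul]; ring
      _ ≤ _ := by gcongr
  -- the oscillation of `k` along the circle
  have hosc : ∀ z, ‖z‖ = t → ‖k z - k z₁‖ ≤ 2 * Real.pi * (t * τ) * ‖k z₁‖ := by
    intro z hz
    have hcirc : ∀ w : ℂ, ‖w‖ = t → circleMap 0 t w.arg = w := by
      intro w hw
      rw [circleMap_zero, ← hw]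
      exact Complex.norm_mul_exp_arg_mul_I w
    have hder : ∀ θ ∈ (Set.univ : Set ℝ), HasDerivWithinAt (fun θ : ℝ => k (circleMap 0 t θ))
        ((deriv u (circleMap 0 t θ) - u (circleMap 0 t θ) * ψ (circleMap 0 t θ)) *
          Complex.exp (-G (circleMap 0 t θ)) * (circleMap 0 t θ * Complex.I)) Set.univ θ := by
      intro θ _
      exact ((hkd _).comp θ (hasDerivAt_circleMap 0 t θ)).hasDerivWithinAt
    have hnorm : ∀ θ : ℝ, ‖circleMap 0 t θ‖ = t := fun θ => by
      rw [norm_circleMap_zero, abs_of_pos ht]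
    have := convex_univ.norm_image_sub_le_of_norm_hasDerivWithin_le (C := τ * ‖k z₁‖ * t) hder
      (fun θ _ => by
        rw [norm_mul, norm_mul _ Complex.I, Complex.norm_I, mul_one, hnorm]
        gcongr
        exact hbd _ (hnorm θ)) (Set.mem_univ z₁.arg) (Set.mem_univ z.arg)
    simp only [hcirc z hz, hcirc z₁ hz₁] at this
    refine this.trans ?_
    have h2 : ‖z.arg - z₁.arg‖ ≤ 2 * Real.pi := by
      rw [Real.norm_eq_abs, abs_le]
      constructor <;> linarith [Complex.arg_le_pi z, Complex.arg_le_pi z₁,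
        Complex.neg_pi_lt_arg z, Complex.neg_pi_lt_arg z₁]
    calc _ ≤ τ * ‖k z₁‖ * t * (2 * Real.pi) := by gcongr
      _ = _ := by ring
  intro z hz huz
  have hkz : k z = 0 := by simp [hk, huz]
  have h3 := Complex.norm_le_of_forall_mem_frontier_norm_le (f := fun z => k z - k z₁)
    (C := 2 * Real.pi * (t * τ) * ‖k z₁‖) (Metric.isBounded_ball (x := 0) (r := t))
    (hkD.sub_const _).diffContOnCl
    (fun w hw => hosc w (by
      rwa [frontier_ball _ ht.ne', mem_sphere_zero_iff_norm] at hw)) (z := z)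
    (subset_closure (by simpa using hz))
  rw [hkz, zero_sub, norm_neg] at h3
  nlinarith

theorem eq_zero_of_eventually {u : ℂ → ℂ} (hu : Differentiable ℂ u) {z : ℂ}
    (h : ∀ᶠ w in 𝓝 z, u w = 0) : u = 0 :=
  AnalyticOnNhd.eq_of_eventuallyEq (fun w _ => hu.analyticAt w) (fun _ _ => analyticAt_const) h

/-- Local divisibility of entire functions at every point gives a global entire quotient. -/
theorem exists_entire_quotient {u v : ℂ → ℂ} (hu : Differentiable ℂ u) (hv : Differentiable ℂ v)
    (hv0 : v ≠ 0) (h : ∀ z, ∃ w, AnalyticAt ℂ w z ∧ ∀ᶠ x in 𝓝 z, u x = v x * w x) :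
    ∃ ψ, Differentiable ℂ ψ ∧ ∀ z, u z = v z * ψ z := by
  have hmer : MeromorphicOn (u / v) Set.univ := fun z _ =>
    (hu.analyticAt z).meromorphicAt.div (hv.analyticAt z).meromorphicAt
  set ψ := toMeromorphicNFOn (u / v) Set.univ with hψ
  have hev : ∀ z, ∃ w, AnalyticAt ℂ w z ∧ (∀ᶠ x in 𝓝 z, u x = v x * w x) ∧ ψ =ᶠ[𝓝[≠] z] w := by
    intro z
    obtain ⟨w, hw, hwe⟩ := h z
    refine ⟨w, hw, hwe, ?_⟩
    have h1 : ∀ᶠ x in 𝓝[≠] z, v x ≠ 0 := by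
      rcases (hv.analyticAt z).eventually_eq_zero_or_eventually_ne_zero with h | h
      · exact absurd (eq_zero_of_eventually hv h) hv0
      · exact h
    filter_upwards [hmer.toMeromorphicNFOn_eq_self_on_nhdsNE (Set.mem_univ z), h1,
      hwe.filter_mono nhdsWithin_le_nhds] with x hx hx1 hx2
    rw [hψ, hx, Pi.div_apply, hx2]
    field_simp
  have hψa : ∀ z, AnalyticAt ℂ ψ z := by
    intro z
    obtain ⟨w, hw, -, hwe⟩ := hev z
    rw [← (meromorphicNFOn_toMeromorphicNFOn (u / v) Set.univ
      (Set.mem_univ z)).meromorphicOrderAt_nonneg_iff_analyticAt]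
    rw [meromorphicOrderAt_congr hwe]
    exact hw.meromorphicOrderAt_nonneg
  refine ⟨ψ, fun z => (hψa z).differentiableAt, fun z => ?_⟩
  obtain ⟨w, hw, hue, hwe⟩ := hev z
  have h2 : ψ z = w z := ((hψa z).continuousAt.eventuallyEq_nhds_iff_eventuallyEq_nhdsNE
    hw.continuousAt).1 hwe |>.eq_of_nhds
  rw [h2]
  exact hue.self_of_nhds

/-- Near `z`, `u x = (x - z) ^ p * φ x` with `φ z ≠ 0` and `p` the order of `u` at `z`, together
with the differentiated identity. -/
theorem local_factor {u : ℂ → ℂ} (hu : Differentiable ℂ u) (hu0 : u ≠ 0) (z : ℂ) :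
    ∃ φ : ℂ → ℂ, AnalyticAt ℂ φ z ∧ φ z ≠ 0 ∧ (∀ᶠ x in 𝓝 z,
      u x = (x - z) ^ (analyticOrderNatAt u z) * φ x) ∧ (∀ᶠ x in 𝓝 z, deriv u x =
        (analyticOrderNatAt u z) * (x - z) ^ (analyticOrderNatAt u z - 1) * φ x +
        (x - z) ^ (analyticOrderNatAt u z) * deriv φ x) := by
  have hne : analyticOrderAt u z ≠ ⊤ := by
    rw [Ne, analyticOrderAt_eq_top]
    exact fun h => hu0 (eq_zero_of_eventually hu h)
  obtain ⟨φ, hφ, hφ0, he⟩ := (hu.analyticAt z).analyticOrderAt_ne_top.1 hne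
  refine ⟨φ, hφ, hφ0, he, ?_⟩
  filter_upwards [he.eventually_nhds, hφ.eventually_analyticAt] with x hx hφx
  rw [Filter.EventuallyEq.deriv_eq hx]
  simp only [smul_eq_mul]
  have h1 : HasDerivAt (fun y : ℂ => (y - z) ^ (analyticOrderNatAt u z))
    ((analyticOrderNatAt u z) * (x - z) ^ (analyticOrderNatAt u z - 1)) x := by
    simpa using ((hasDerivAt_id x).sub_const z).fun_pow (analyticOrderNatAt u z)
  exact (h1.mul hφx.differentiableAt.hasDerivAt).deriv

theorem order_pos {u : ℂ → ℂ} (hu : Differentiable ℂ u) (hu0 : u ≠ 0) {z : ℂ} :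
    0 < analyticOrderNatAt u z ↔ u z = 0 := by
  have hne : analyticOrderAt u z ≠ ⊤ := by
    rw [Ne, analyticOrderAt_eq_top]
    exact fun h => hu0 (eq_zero_of_eventually hu h)
  rw [Nat.pos_iff_ne_zero, Ne, not_iff_comm]
  change u z ≠ 0 ↔ _
  rw [← (hu.analyticAt z).analyticOrderAt_eq_zero, ← Nat.cast_analyticOrderNatAt hne]
  simp

/-! ### The case in which `H` is small -/

/-- Near an `a`-point of `F` at which `G` vanishes, `(F - a) (F - b)` divides `F' G`:
the derivative loses one order of vanishing and `G` restores it. -/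
theorem local_quotient {F G : ℂ → ℂ} (hF : Differentiable ℂ F) (hG : Differentiable ℂ G)
    (hG0 : G ≠ 0) {a b : ℂ} (hab : a ≠ b) (hFa : (fun z => F z - a) ≠ 0) {z : ℂ}
    (hz : F z = a) (hGz : G z = 0) :
    ∃ w, AnalyticAt ℂ w z ∧
      ∀ᶠ x in 𝓝 z, deriv F x * G x = ((F x - a) * (F x - b)) * w x := by
  have hFa' : Differentiable ℂ (fun z => F z - a) := hF.sub_const a
  obtain ⟨φ, hφ, hφ0, he, hd⟩ := local_factor hFa' hFa z
  obtain ⟨γ, hγ, -, hγe, -⟩ := local_factor hG hG0 z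
  have hp : 0 < analyticOrderNatAt (fun z => F z - a) z :=
    (order_pos hFa' hFa).2 (by simp [hz])
  have hk : 0 < analyticOrderNatAt G z := (order_pos hG hG0).2 hGz
  generalize analyticOrderNatAt (fun z => F z - a) z = p at *
  generalize analyticOrderNatAt G z = k at *
  obtain ⟨p, rfl⟩ : ∃ p', p = p' + 1 := ⟨p - 1, by omega⟩
  obtain ⟨k, rfl⟩ : ∃ k', k = k' + 1 := ⟨k - 1, by omega⟩
  have hb : F z - b ≠ 0 := by rw [hz]; exact sub_ne_zero.2 hab
  refine ⟨fun x => (((p + 1 : ℕ) : ℂ) * φ x + (x - z) * deriv φ x) * (x - z) ^ k * γ x /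
    (φ x * (F x - b)), ?_, ?_⟩
  · have h1 : AnalyticAt ℂ (fun x : ℂ => x - z) z := analyticAt_id.sub analyticAt_const
    exact (((((analyticAt_const.mul hφ).add (h1.mul hφ.deriv)).mul (h1.pow k)).mul hγ).div
      (hφ.mul ((hF.analyticAt z).sub analyticAt_const)) (mul_ne_zero hφ0 hb))
  · have h2 : ∀ᶠ x in 𝓝 z, F x - b ≠ 0 :=
      ((hF z).continuousAt.sub continuousAt_const).eventually_ne hb
    filter_upwards [he, hd, hγe, h2, hφ.continuousAt.eventually_ne hφ0] with x h1 h2 h3 h4 h5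
    rw [deriv_sub_const] at h2
    rw [h1, h2, h3]
    have hp1 : p + 1 - 1 = p := rfl
    rw [hp1]
    field_simp
    ring

/-- If `H = F` at all `a`- and `b`-points of `F`, then
`F' (F - H) / ((F - a) (F - b))` is entire. -/
theorem exists_entire_log_deriv {F H : ℂ → ℂ} (hF : Differentiable ℂ F) (hH : Differentiable ℂ H)
    {a b : ℂ} (hab : a ≠ b) (hFa : (fun z => F z - a) ≠ 0) (hFb : (fun z => F z - b) ≠ 0)
    (ha : ∀ z, F z = a → H z = a) (hb : ∀ z, F z = b → H z = b) :
    ∃ ψ, Differentiable ℂ ψ ∧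
      ∀ z, deriv F z * (F z - H z) = ((F z - a) * (F z - b)) * ψ z := by
  by_cases hG0 : (fun z => F z - H z) = 0
  · exact ⟨0, differentiable_const _, fun z => by simp [show F z - H z = 0 from congrFun hG0 z]⟩
  have hG : Differentiable ℂ (fun z => F z - H z) := hF.sub hH
  refine exists_entire_quotient (u := fun z => deriv F z * (F z - H z))
    (v := fun z => (F z - a) * (F z - b)) (hF.deriv.mul hG)
    ((hF.sub_const a).mul (hF.sub_const b)) ?_ ?_
  · intro h
    obtain ⟨z, hz⟩ := Function.ne_iff.1 hFa
    -- away from the zeros of `F - a`, the factor `F - b` vanishes near `z`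
    refine hFb (eq_zero_of_eventually (hF.sub_const b) (z := z) ?_)
    filter_upwards [((hF z).continuousAt.sub continuousAt_const).eventually_ne hz] with x hx
    exact (mul_eq_zero.1 (congrFun h x)).resolve_left hx
  · intro z
    by_cases hza : F z = a
    · exact local_quotient hF hG hG0 hab hFa hza (by simp [ha z hza, hza])
    by_cases hzb : F z = b
    · obtain ⟨w, hw, he⟩ := local_quotient hF hG hG0 hab.symm hFb hzb (by simp [hb z hzb, hzb])
      exact ⟨w, hw, he.mono fun x hx => by rw [hx, mul_comm (F x - b)]⟩
    have hza' := sub_ne_zero.2 hza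
    have hzb' := sub_ne_zero.2 hzb
    have hFz := (hF z).continuousAt
    refine ⟨fun x => deriv F x * (F x - H x) / ((F x - a) * (F x - b)), ?_, ?_⟩
    · exact ((hF.deriv.mul hG).analyticAt z).div
        (((hF.sub_const a).mul (hF.sub_const b)).analyticAt z) (mul_ne_zero hza' hzb')
    · filter_upwards [(hFz.sub continuousAt_const).eventually_ne hza',
        (hFz.sub continuousAt_const).eventually_ne hzb'] with x h1 h2
      field_simp [show F x - a ≠ 0 from h1, show F x - b ≠ 0 from h2]

theorem norm_deriv_le_of_bound {F : ℂ → ℂ} (hF : Differentiable ℂ F) {R r C : ℝ} (hr : 0 < r)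
    (hC : ∀ z, ‖z‖ ≤ R + r → ‖F z‖ ≤ C) {z : ℂ} (hz : ‖z‖ ≤ R) : ‖deriv F z‖ ≤ C / r := by
  refine Complex.norm_deriv_le_of_forall_mem_sphere_norm_le hr hF.diffContOnCl fun w hw => hC w ?_
  rw [mem_sphere_iff_norm] at hw
  calc ‖w‖ = ‖z + (w - z)‖ := by congr 1; ring
    _ ≤ ‖z‖ + ‖w - z‖ := norm_add_le _ _
    _ ≤ R + r := by linarith

/-- `H` cannot be much smaller than `F` at a scale `ρ` at which `F` grows regularly.
Otherwise, with `ψ = F' (F - H) / ((F - a) (F - b))` entire, the difference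
`F' / (F - a) - ψ = F' (H - b) / ((F - a) (F - b))` is tiny on a circle on which
`(F - a) (F - b)` is large. By `no_zero_of_log_deriv_close`, `F` then has no `a`-point inside the
circle, contradicting `exists_zero_in_ball`. -/
theorem not_small {F H : ℂ → ℂ} (hF : Differentiable ℂ F) (hH : Differentiable ℂ H)
    {a b : ℂ} (hab : a ≠ b) (ha : ∀ z, F z = a → H z = a) (hb : ∀ z, F z = b → H z = b)
    {L l ρ : ℝ} (hρ : 0 < ρ) (hlL : 1000 * l ≤ L)
    (hl : 100 * (1 + ‖a‖ + ‖b‖ + ‖F 0 - a‖) ≤ Real.exp l)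
    (hbd : ∀ z, ‖z‖ ≤ 8 * ρ → ‖F z‖ ≤ Real.exp (L + l))
    {z₀ : ℂ} (hz₀ : ‖z₀‖ ≤ ρ) (hFz₀ : Real.exp L ≤ ‖F z₀‖)
    (hHs : ∀ z, ‖z‖ ≤ 2 * ρ → ‖H z‖ ≤ Real.exp (L - 300 * l)) : False := by
  have na := norm_nonneg a
  have nb := norm_nonneg b
  have n0 := norm_nonneg (F 0 - a)
  have hl0 : 0 < l := by
    have : (1 : ℝ) < Real.exp l := by linarith
    simpa using this
  have hcmp : ∀ x, l ≤ x → 100 * (1 + ‖a‖ + ‖b‖ + ‖F 0 - a‖) ≤ Real.exp x := fun x hx =>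
    hl.trans (Real.exp_le_exp.2 hx)
  have hstep : ∀ x, 100 * Real.exp x ≤ Real.exp (x + l) := fun x => by
    rw [Real.exp_add, mul_comm]
    gcongr
    linarith
  -- absorbing a constant
  have hup : ∀ (u c : ℂ) (x : ℝ), ‖c‖ ≤ ‖a‖ + ‖b‖ → l ≤ x → ‖u‖ ≤ Real.exp x →
      ‖u - c‖ ≤ Real.exp (x + l) := by
    intro u c x hc hx hu
    have := hstep x
    have := hcmp x hx
    have := norm_sub_le u c
    linarith
  have hlow : ∀ c : ℂ, ‖c‖ ≤ ‖a‖ + ‖b‖ → Real.exp (L - l) ≤ ‖F z₀ - c‖ := by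
    intro c hc
    have h1 := hstep (L - l)
    have h2 := hcmp (L - l) (by linarith)
    have h3 := norm_sub_norm_le (F z₀) c
    rw [sub_add_cancel] at h1
    linarith
  have hca : ‖a‖ ≤ ‖a‖ + ‖b‖ := by linarith
  have hcb : ‖b‖ ≤ ‖a‖ + ‖b‖ := by linarith
  have hne : ∀ c : ℂ, ‖c‖ ≤ ‖a‖ + ‖b‖ → (fun z => F z - c) ≠ 0 := by
    intro c hc h
    have h1 := hlow c hc
    rw [show F z₀ - c = 0 from congrFun h z₀, norm_zero] at h1
    exact absurd h1 (not_le.2 (Real.exp_pos _))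
  obtain ⟨ψ, hψ, hψe⟩ := exists_entire_log_deriv hF hH hab (hne a hca) (hne b hcb) ha hb
  have hup2 : ∀ c : ℂ, ‖c‖ ≤ ‖a‖ + ‖b‖ → ∀ z, ‖z‖ ≤ 8 * ρ → ‖F z - c‖ ≤ Real.exp (L + 2 * l) := by
    intro c hc z hz
    have := hup (F z) c (L + l) hc (by linarith) (hbd z hz)
    rwa [show L + l + l = L + 2 * l by ring] at this
  obtain ⟨t, hst, hts, hPt⟩ := exists_min_modulus (B := 2 * L + 4 * l) (κ := 6 * l) hρ
    (by positivity) hz₀ (u := fun z => (F z - a) * (F z - b))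
    ((hF.sub_const a).mul (hF.sub_const b)) (fun z hz => by
      rw [norm_mul, show 2 * L + 4 * l = (L + 2 * l) + (L + 2 * l) by ring, Real.exp_add]
      gcongr
      · exact hup2 a hca z hz
      · exact hup2 b hcb z hz) (by
      rw [norm_mul, show 2 * L + 4 * l - 6 * l = (L - l) + (L - l) by ring, Real.exp_add]
      gcongr
      · exact hlow a hca
      · exact hlow b hcb)
  have ht : 0 < t := hρ.trans_le hst
  have hFa : ∀ z, ‖z‖ = t → Real.exp (L - 178 * l) ≤ ‖F z - a‖ := by
    intro z hz
    have h1 := hPt z hz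
    have h2 := hup2 b hcb z (by linarith)
    rw [norm_mul, show 2 * L + 4 * l - 30 * (6 * l) = (L - 178 * l) + (L + 2 * l) by ring,
      Real.exp_add] at h1
    have h3 : ‖F z - a‖ * ‖F z - b‖ ≤ ‖F z - a‖ * Real.exp (L + 2 * l) := by gcongr
    exact le_of_mul_le_mul_right (h1.trans h3) (Real.exp_pos _)
  obtain ⟨w, hwt, hw0⟩ := exists_zero_in_ball (hF.sub_const a) ht hFa (by
    have := hcmp (L - 178 * l) (by linarith)
    linarith)
  refine no_zero_of_log_deriv_close (hF.sub_const a) hψ (τ := Real.exp (-(122 * l)) / ρ) ht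
    (by positivity) ?_ (fun z hz => norm_pos_iff.1 ((Real.exp_pos _).trans_le (hFa z hz))) ?_
    w hwt hw0
  · have h1 : t * (Real.exp (-(122 * l)) / ρ) ≤ 2 * Real.exp (-(122 * l)) := by
      rw [mul_div_assoc', div_le_iff₀ hρ]
      nlinarith [Real.exp_pos (-(122 * l))]
    have h2 : 100 * Real.exp (-(122 * l)) ≤ 1 := by
      refine (hstep _).trans ?_
      rw [Real.exp_le_one_iff]
      linarith
    nlinarith [Real.pi_lt_four, Real.pi_pos, Real.exp_pos (-(122 * l))]
  · intro z hz
    rw [deriv_sub_const]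
    have hPz := hPt z hz
    have hPpos := (Real.exp_pos _).trans_le hPz
    have hbpos : 0 < ‖F z - b‖ := by
      rw [norm_mul] at hPpos
      exact pos_of_mul_pos_right hPpos (norm_nonneg _)
    have hF' : ‖deriv F z‖ ≤ Real.exp (L + l) / ρ :=
      norm_deriv_le_of_bound hF (R := 2 * ρ) hρ (fun w hw => hbd w (by linarith)) (by linarith)
    have hHb : ‖H z - b‖ ≤ Real.exp (L - 299 * l) := by
      have := hup (H z) b (L - 300 * l) hcb (by linarith) (hHs z (by linarith))
      rwa [show L - 300 * l + l = L - 299 * l by ring] at this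
    refine le_of_mul_le_mul_right ?_ hbpos
    calc ‖deriv F z - (F z - a) * ψ z‖ * ‖F z - b‖ = ‖deriv F z‖ * ‖H z - b‖ := by
          rw [← norm_mul, ← norm_mul]
          congr 1
          linear_combination hψe z
      _ ≤ Real.exp (L + l) / ρ * Real.exp (L - 299 * l) := by gcongr
      _ = Real.exp (-(122 * l)) / ρ * Real.exp (2 * L + 4 * l - 30 * (6 * l)) := by
          rw [div_mul_eq_mul_div, div_mul_eq_mul_div, ← Real.exp_add, ← Real.exp_add]
          congr 2
          ring
      _ ≤ Real.exp (-(122 * l)) / ρ * ‖(F z - a) * (F z - b)‖ := by gcongr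
      _ = _ := by rw [norm_mul]; ring

/-! ### The auxiliary products and their zeros -/

/-- `u` is divisible by `(x - z) ^ k` in the ring of germs of analytic functions at `z`. -/
def VanishesTo (k : ℕ) (u : ℂ → ℂ) (z : ℂ) : Prop :=
  ∃ w : ℂ → ℂ, AnalyticAt ℂ w z ∧ ∀ᶠ x in 𝓝 z, u x = (x - z) ^ k * w x

theorem VanishesTo.mul {k j : ℕ} {u v : ℂ → ℂ} {z : ℂ} (hu : VanishesTo k u z)
    (hv : VanishesTo j v z) : VanishesTo (k + j) (fun x => u x * v x) z := by
  obtain ⟨w, hw, he⟩ := hu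
  obtain ⟨w', hw', he'⟩ := hv
  refine ⟨fun x => w x * w' x, hw.mul hw', ?_⟩
  filter_upwards [he, he'] with x h1 h2
  rw [h1, h2]
  ring

theorem VanishesTo.pow {k : ℕ} {u : ℂ → ℂ} {z : ℂ} (hu : VanishesTo k u z) (n : ℕ) :
    VanishesTo (n * k) (fun x => u x ^ n) z := by
  obtain ⟨w, hw, he⟩ := hu
  refine ⟨fun x => w x ^ n, hw.pow n, ?_⟩
  filter_upwards [he] with x h1
  rw [h1]
  ring

theorem VanishesTo.prod {ι : Type*} {s : Finset ι} {k : ι → ℕ} {u : ι → ℂ → ℂ} {z : ℂ}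
    (hu : ∀ i, VanishesTo (k i) (u i) z) :
    VanishesTo (∑ i ∈ s, k i) (fun x => ∏ i ∈ s, u i x) z := by
  classical
  induction s using Finset.induction_on with
  | empty => exact ⟨fun _ => 1, analyticAt_const, by simp⟩
  | insert i s hi ih =>
    have := (hu i).mul ih
    simpa only [Finset.sum_insert hi, Finset.prod_insert hi] using this

/-- The function `(F - H) (F' (H - a) (H - b) - m H' (F - a) (F - b))`. Its second factor vanishes
to higher order at common `a`- or `b`-points of `F` and `H` with multiplicities `m` and `1`. -/
noncomputable def auxNum (a b : ℂ) (m : ℕ) (F H : ℂ → ℂ) (z : ℂ) : ℂ :=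
  (F z - H z) * (deriv F z * ((H z - a) * (H z - b)) - m * deriv H z * ((F z - a) * (F z - b)))

theorem auxNum_comm (a b : ℂ) (m : ℕ) (F H : ℂ → ℂ) : auxNum a b m F H = auxNum b a m F H := by
  funext z
  simp only [auxNum]
  ring

theorem differentiable_auxNum (a b : ℂ) (m : ℕ) {F H : ℂ → ℂ} (hF : Differentiable ℂ F)
    (hH : Differentiable ℂ H) : Differentiable ℂ (auxNum a b m F H) := by
  have := hF.deriv
  have := hH.deriv
  unfold auxNum
  fun_prop

/-- At a common `a`-point of `F` and `H` with multiplicities `p` and `r`, the function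
`auxNum a b m F H` vanishes to order `p + r`, and to order `p + r + 1` if `(p, r) = (m, 1)` (the
leading terms of the bracket cancel) or if `p, r ≥ 2` (the factor `F - H` has a multiple zero). -/
theorem vanishesTo_auxNum {F H φ χ : ℂ → ℂ} {a b z : ℂ} {p r : ℕ} (hp : 0 < p) (hr : 0 < r)
    (hF : Differentiable ℂ F) (hH : Differentiable ℂ H)
    (hφ : AnalyticAt ℂ φ z) (hχ : AnalyticAt ℂ χ z)
    (hFe : ∀ᶠ x in 𝓝 z, F x - a = (x - z) ^ p * φ x)
    (hHe : ∀ᶠ x in 𝓝 z, H x - a = (x - z) ^ r * χ x)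
    (hFd : ∀ᶠ x in 𝓝 z, deriv F x = p * (x - z) ^ (p - 1) * φ x + (x - z) ^ p * deriv φ x)
    (hHd : ∀ᶠ x in 𝓝 z, deriv H x = r * (x - z) ^ (r - 1) * χ x + (x - z) ^ r * deriv χ x)
    (m : ℕ) :
    VanishesTo (p + r + if (p = m ∧ r = 1) ∨ (2 ≤ p ∧ 2 ≤ r) then 1 else 0)
      (auxNum a b m F H) z := by
  have hx : AnalyticAt ℂ (fun x : ℂ => x - z) z := analyticAt_id.sub analyticAt_const
  have hFa := hF.analyticAt z
  have hHa := hH.analyticAt z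
  have hφ' := hφ.deriv
  have hχ' := hχ.deriv
  obtain ⟨p, rfl⟩ : ∃ p', p = p' + 1 := ⟨p - 1, by omega⟩
  obtain ⟨r, rfl⟩ : ∃ r', r = r' + 1 := ⟨r - 1, by omega⟩
  simp only [Nat.add_sub_cancel] at hFd hHd
  split_ifs with h
  · rcases h with ⟨rfl, h1⟩ | ⟨h1, h2⟩
    · obtain rfl : r = 0 := by omega
      refine ⟨fun x => ((x - z) ^ p * φ x - χ x) * (-(((p + 1 : ℕ) : ℂ) * φ x * χ x *
        ((x - z) ^ p * φ x - χ x)) + deriv φ x * χ x * (H x - b)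
          - ((p + 1 : ℕ) : ℂ) * deriv χ x * φ x * (F x - b)), by fun_prop, ?_⟩
      filter_upwards [hFe, hHe, hFd, hHd] with x h1 h2 h3 h4
      have h5 : F x = a + (x - z) ^ (p + 1) * φ x := by linear_combination h1
      have h6 : H x = a + (x - z) ^ (0 + 1) * χ x := by linear_combination h2
      rw [auxNum, h3, h4, h5, h6]
      push_cast
      ring
    · obtain ⟨p, rfl⟩ : ∃ p', p = p' + 1 := ⟨p - 1, by omega⟩
      obtain ⟨r, rfl⟩ : ∃ r', r = r' + 1 := ⟨r - 1, by omega⟩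
      refine ⟨fun x => ((x - z) ^ p * φ x - (x - z) ^ r * χ x) *
        ((((p + 1 + 1 : ℕ) : ℂ) * φ x + (x - z) * deriv φ x) * χ x * (H x - b) -
          m * (((r + 1 + 1 : ℕ) : ℂ) * χ x + (x - z) * deriv χ x) * φ x * (F x - b)),
          by fun_prop, ?_⟩
      filter_upwards [hFe, hHe, hFd, hHd] with x h1 h2 h3 h4
      rw [auxNum, h1, h2, h3, h4, show F x - H x = (F x - a) - (H x - a) by ring, h1, h2]
      ring
  · refine ⟨fun x => ((x - z) ^ p * φ x - (x - z) ^ r * χ x) *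
        ((((p + 1 : ℕ) : ℂ) * φ x + (x - z) * deriv φ x) * χ x * (H x - b) -
          m * (((r + 1 : ℕ) : ℂ) * χ x + (x - z) * deriv χ x) * φ x * (F x - b)),
          by fun_prop, ?_⟩
    filter_upwards [hFe, hHe, hFd, hHd] with x h1 h2 h3 h4
    rw [auxNum, h1, h2, h3, h4, show F x - H x = (F x - a) - (H x - a) by ring, h1, h2]
    ring

/-- A product of total degree `524` in `F` and `H` dividing `highProd a b F H` when `F` and `H`
share `a` and `b` IM. The exponents `135 = 8 * 17 - 1` and `127 = 8 * 16 - 1` come from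
`order_count`. -/
noncomputable def lowProd (a b : ℂ) (F H : ℂ → ℂ) (z : ℂ) : ℂ :=
  ((F z - a) * (F z - b)) ^ 135 * ((H z - a) * (H z - b)) ^ 127

/-- A product whose total degree in `F`, `H` and their derivatives is `8 + 8 * 16 * 4 = 520`,
smaller than that of `lowProd a b F H`. -/
noncomputable def highProd (a b : ℂ) (F H : ℂ → ℂ) (z : ℂ) : ℂ :=
  deriv F z ^ 8 *
    (∏ m ∈ Finset.Icc 1 8, (auxNum a b m F H z * auxNum a b m H F z)) ^ 8

theorem lowProd_comm (a b : ℂ) (F H : ℂ → ℂ) : lowProd a b F H = lowProd b a F H := by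
  funext z
  simp only [lowProd, mul_comm]

theorem highProd_comm (a b : ℂ) (F H : ℂ → ℂ) : highProd a b F H = highProd b a F H := by
  funext z
  simp only [highProd, auxNum_comm a b]

theorem differentiable_highProd (a b : ℂ) {F H : ℂ → ℂ} (hF : Differentiable ℂ F)
    (hH : Differentiable ℂ H) : Differentiable ℂ (highProd a b F H) := by
  have := hF.deriv
  have h1 := fun m => differentiable_auxNum a b m hF hH
  have h2 := fun m => differentiable_auxNum a b m hH hF
  unfold highProd
  fun_prop

/-- The count behind `lowProd ∣ highProd` at a common `a`-point of multiplicities `p` and `r`.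
The derivative `F'` accounts for `p - 1`. If `p, r ≥ 2`, or if one of them is `1` and the other is
at most `8`, some `auxNum` has an additional zero; if one of them exceeds `8`, then `p + r ≥ 8`
already suffices. -/
theorem order_count {p r : ℕ} (hp : 0 < p) (hr : 0 < r) :
    135 * p + 127 * r ≤ 8 * (p - 1) + 8 * ∑ m ∈ Finset.Icc 1 8,
      ((p + r + if (p = m ∧ r = 1) ∨ (2 ≤ p ∧ 2 ≤ r) then 1 else 0) +
        (r + p + if (r = m ∧ p = 1) ∨ (2 ≤ r ∧ 2 ≤ p) then 1 else 0)) := by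
  by_cases h : 2 ≤ p ∧ 2 ≤ r
  · simp only [h, or_true, if_true, and_self, Finset.sum_const, Nat.card_Icc, smul_eq_mul]
    omega
  · rcases (by omega : r = 1 ∨ p = 1) with rfl | rfl
    · by_cases h8 : p ≤ 8
      · interval_cases p <;> decide
      · simp only [Finset.sum_add_distrib, Finset.sum_const, Nat.card_Icc, smul_eq_mul]
        omega
    · by_cases h8 : r ≤ 8
      · interval_cases r <;> decide
      · simp only [Finset.sum_add_distrib, Finset.sum_const, Nat.card_Icc, smul_eq_mul]
        omega

/-- Near a common `a`-point of `F` and `H`, `lowProd` divides `highProd`. -/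
theorem local_quotient_prod {F H : ℂ → ℂ} (hF : Differentiable ℂ F) (hH : Differentiable ℂ H)
    {a b : ℂ} (hab : a ≠ b) (hFa : (fun z => F z - a) ≠ 0) (hHa : (fun z => H z - a) ≠ 0) {z : ℂ}
    (hz : F z = a) (hHz : H z = a) :
    ∃ w, AnalyticAt ℂ w z ∧ ∀ᶠ x in 𝓝 z, highProd a b F H x = lowProd a b F H x * w x := by
  obtain ⟨φ, hφ, hφ0, hFe, hFd⟩ := local_factor (hF.sub_const a) hFa z
  obtain ⟨χ, hχ, hχ0, hHe, hHd⟩ := local_factor (hH.sub_const a) hHa z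
  have hp : 0 < analyticOrderNatAt (fun z => F z - a) z :=
    (order_pos (hF.sub_const a) hFa).2 (by simp [hz])
  have hr : 0 < analyticOrderNatAt (fun z => H z - a) z :=
    (order_pos (hH.sub_const a) hHa).2 (by simp [hHz])
  generalize analyticOrderNatAt (fun z => F z - a) z = p at *
  generalize analyticOrderNatAt (fun z => H z - a) z = r at *
  simp only [deriv_sub_const] at hFd hHd
  have hx : AnalyticAt ℂ (fun x : ℂ => x - z) z := analyticAt_id.sub analyticAt_const
  have hd : VanishesTo (p - 1) (deriv F) z := by
    have := hφ.deriv
    refine ⟨fun x => p * φ x + (x - z) * deriv φ x, by fun_prop, ?_⟩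
    filter_upwards [hFd] with x h
    obtain ⟨p, rfl⟩ : ∃ p', p = p' + 1 := ⟨p - 1, by omega⟩
    rw [h, Nat.add_sub_cancel]
    ring
  have hV := (hd.pow 8).mul ((VanishesTo.prod (s := Finset.Icc 1 8) fun m =>
    (vanishesTo_auxNum (b := b) hp hr hF hH hφ hχ hFe hHe hFd hHd m).mul
      (vanishesTo_auxNum (b := b) hr hp hH hF hχ hφ hHe hFe hHd hFd m)).pow 8)
  obtain ⟨k, hk⟩ := Nat.exists_eq_add_of_le (order_count hp hr)
  obtain ⟨w, hw, he⟩ := hV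
  rw [hk] at he
  have hFb : F z - b ≠ 0 := by rw [hz]; exact sub_ne_zero.2 hab
  have hHb : H z - b ≠ 0 := by rw [hHz]; exact sub_ne_zero.2 hab
  have hFA := hF.analyticAt z
  have hHA := hH.analyticAt z
  refine ⟨fun x => (x - z) ^ k * w x / ((φ x * (F x - b)) ^ 135 * (χ x * (H x - b)) ^ 127), ?_, ?_⟩
  · refine ((hx.pow k).mul hw).div ?_ ?_
    · fun_prop
    · exact mul_ne_zero (pow_ne_zero _ (mul_ne_zero hφ0 hFb)) (pow_ne_zero _ (mul_ne_zero hχ0 hHb))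
  · filter_upwards [he, hFe, hHe, hφ.continuousAt.eventually_ne hφ0,
      hχ.continuousAt.eventually_ne hχ0,
      ((hF z).continuousAt.sub continuousAt_const).eventually_ne hFb,
      ((hH z).continuousAt.sub continuousAt_const).eventually_ne hHb] with x h1 h2 h3 h4 h5 h6 h7
    have h6' : F x - b ≠ 0 := h6
    have h7' : H x - b ≠ 0 := h7
    rw [show highProd a b F H x = _ from h1, lowProd, h2, h3, pow_add, pow_add]
    have h8 : (φ x * (F x - b)) ^ 135 * (χ x * (H x - b)) ^ 127 ≠ 0 :=
      mul_ne_zero (pow_ne_zero _ (mul_ne_zero h4 h6')) (pow_ne_zero _ (mul_ne_zero h5 h7'))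
    rw [mul_div_assoc', eq_div_iff h8]
    simp only [mul_pow, ← pow_mul, mul_comm p 135, mul_comm r 127]
    ac_rfl

theorem exists_entire_quotient_prod {F H : ℂ → ℂ} (hF : Differentiable ℂ F)
    (hH : Differentiable ℂ H) {a b : ℂ} (hab : a ≠ b)
    (hFa : (fun z => F z - a) ≠ 0) (hHa : (fun z => H z - a) ≠ 0)
    (hFb : (fun z => F z - b) ≠ 0) (hHb : (fun z => H z - b) ≠ 0)
    (hU : lowProd a b F H ≠ 0)
    (ha : ∀ z, F z = a ↔ H z = a) (hb : ∀ z, F z = b ↔ H z = b) :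
    ∃ ψ, Differentiable ℂ ψ ∧ ∀ z, highProd a b F H z = lowProd a b F H z * ψ z := by
  have hUd : Differentiable ℂ (lowProd a b F H) := by unfold lowProd; fun_prop
  refine exists_entire_quotient (differentiable_highProd a b hF hH) hUd hU ?_
  intro z
  by_cases hza : F z = a
  · exact local_quotient_prod hF hH hab hFa hHa hza ((ha z).1 hza)
  by_cases hzb : F z = b
  · rw [highProd_comm, lowProd_comm]
    exact local_quotient_prod hF hH hab.symm hFb hHb hzb ((hb z).1 hzb)
  have hUz : lowProd a b F H z ≠ 0 :=
    mul_ne_zero (pow_ne_zero _ (mul_ne_zero (sub_ne_zero.2 hza) (sub_ne_zero.2 hzb)))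
      (pow_ne_zero _ (mul_ne_zero (sub_ne_zero.2 (mt (ha z).2 hza))
        (sub_ne_zero.2 (mt (hb z).2 hzb))))
  refine ⟨fun x => highProd a b F H x / lowProd a b F H x,
    ((differentiable_highProd a b hF hH).analyticAt z).div (hUd.analyticAt z) hUz, ?_⟩
  filter_upwards [(hUd z).continuousAt.eventually_ne hUz] with x hx
  field_simp

/-! ### Non-vanishing and size of the auxiliary products -/

/-- Entire functions with vanishing Wronskian are proportional. -/
theorem eq_const_mul_of_wronskian {u v : ℂ → ℂ} (hu : Differentiable ℂ u) (hv : Differentiable ℂ v)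
    (hv0 : v ≠ 0) (h : ∀ z, deriv u z * v z = u z * deriv v z) : ∃ C, ∀ z, u z = C * v z := by
  obtain ⟨z, hz⟩ := Function.ne_iff.1 hv0
  obtain ⟨ε, hε, hb⟩ := Metric.eventually_nhds_iff_ball.1 ((hv z).continuousAt.eventually_ne hz)
  obtain ⟨C, hC⟩ := Metric.isOpen_ball.exists_is_const_of_deriv_eq_zero (f := fun x => u x / v x)
    (Metric.isPreconnected_ball (x := z) (r := ε))
    (fun x hx => ((hu x).div (hv x) (hb x hx)).differentiableWithinAt) (fun x hx => by
      rw [deriv_fun_div (hu x) (hv x) (hb x hx), h x]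
      simp)
  refine ⟨C, fun x => ?_⟩
  have h0 : (fun x => u x - C * v x) = 0 := by
    refine eq_zero_of_eventually (hu.sub (hv.const_mul C)) (z := z) ?_
    filter_upwards [Metric.ball_mem_nhds z hε] with x hx
    have := hC x hx
    rw [div_eq_iff (hb x hx)] at this
    rw [this, sub_self]
  exact sub_eq_zero.1 (congrFun h0 x)

/-- If `F ≠ H` share `a` and `b` and `H` is onto, then `auxNum a b m F H` is not identically zero.
Otherwise `(F - a) (H - b) ^ m` and `(F - b) (H - a) ^ m` have vanishing Wronskian, so
`(F - a) (H - b) ^ m = C (F - b) (H - a) ^ m`. Choose `w ≠ 1` with `w ^ m = C` and the value `c` with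
`c - b = w (c - a)`: at a point where `H = c` this reads `F - a = F - b`. The only case without
such a `w` is `m = 1`, `C = 1`, and then `F = H`. -/
theorem auxNum_ne_zero {F H : ℂ → ℂ} (hF : Differentiable ℂ F) (hH : Differentiable ℂ H)
    {a b : ℂ} (hab : a ≠ b) (ha : ∀ z, F z = a ↔ H z = a) (hb : ∀ z, F z = b ↔ H z = b)
    (hFH : F ≠ H) (hsurj : ∀ c, ∃ z, H z = c) {m : ℕ} (hm : 0 < m) : auxNum a b m F H ≠ 0 := by
  intro h0
  have hab' := sub_ne_zero.2 hab
  -- the second factor of `auxNum` vanishes identically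
  have hB : (fun z => deriv F z * ((H z - a) * (H z - b)) -
      m * deriv H z * ((F z - a) * (F z - b))) = 0 := by
    obtain ⟨z, hz⟩ := Function.ne_iff.1 hFH
    have hF' := hF.deriv
    have hH' := hH.deriv
    refine eq_zero_of_eventually (by fun_prop) (z := z) ?_
    filter_upwards [((hF z).continuousAt.sub (hH z).continuousAt).eventually_ne
      (sub_ne_zero.2 hz)] with x hx
    exact (mul_eq_zero.1 (congrFun h0 x)).resolve_left hx
  -- a value of `H` other than `a` and `b`
  have hval : ∀ c, c ≠ a → c ≠ b → ∃ z, H z = c ∧ F z - a ≠ 0 ∧ F z - b ≠ 0 := by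
    intro c hca hcb
    obtain ⟨z, hz⟩ := hsurj c
    exact ⟨z, hz, sub_ne_zero.2 fun h => hca (hz ▸ (ha z).1 h),
      sub_ne_zero.2 fun h => hcb (hz ▸ (hb z).1 h)⟩
  obtain ⟨z₁, hz₁, hz₁a, hz₁b⟩ := hval (2 * a - b)
    (fun h => hab' (by linear_combination h)) (fun h => hab' (by linear_combination h / 2))
  have hd : ∀ c d z, HasDerivAt (fun z => (F z - c) * (H z - d) ^ m)
      (deriv F z * (H z - d) ^ m + (F z - c) * (m * (H z - d) ^ (m - 1) * deriv H z)) z :=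
    fun c d z => ((hF z).hasDerivAt.sub_const c).mul (((hH z).hasDerivAt.sub_const d).fun_pow m)
  obtain ⟨C, hC⟩ := eq_const_mul_of_wronskian (u := fun z => (F z - a) * (H z - b) ^ m)
    (v := fun z => (F z - b) * (H z - a) ^ m) (by fun_prop) (by fun_prop)
    (fun h => by
      refine mul_ne_zero hz₁b (pow_ne_zero m ?_) (congrFun h z₁)
      rw [hz₁]
      exact fun h => hab' (by linear_combination h))
    (fun z => by
      rw [(hd a b z).deriv, (hd b a z).deriv]
      obtain ⟨m, rfl⟩ : ∃ m', m = m' + 1 := ⟨m - 1, by omega⟩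
      have := congrFun hB z
      simp only [Pi.zero_apply] at this
      rw [Nat.add_sub_cancel]
      linear_combination (a - b) * (H z - a) ^ m * (H z - b) ^ m * this)
  have hC0 : C ≠ 0 := by
    rintro rfl
    have := hC z₁
    rw [zero_mul, hz₁] at this
    refine mul_ne_zero hz₁a (pow_ne_zero m ?_) this
    exact fun h => hab' (by linear_combination h / 2)
  by_cases h1 : m = 1 ∧ C = 1
  · obtain ⟨rfl, rfl⟩ := h1
    refine hFH (funext fun z => mul_left_cancel₀ hab' ?_)
    linear_combination hC z
  obtain ⟨w, hw, hw1⟩ : ∃ w : ℂ, w ^ m = C ∧ w ≠ 1 := by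
    by_cases hC1 : C = 1
    · have hm1 : 1 < m := by
        rcases Nat.lt_or_ge 1 m with h | h
        · exact h
        · exact absurd ⟨by omega, hC1⟩ h1
      have hr := Complex.isPrimitiveRoot_exp m hm.ne'
      exact ⟨_, hr.pow_eq_one.trans hC1.symm, hr.ne_one hm1⟩
    · obtain ⟨w, hw⟩ := IsAlgClosed.exists_pow_nat_eq C hm
      exact ⟨w, hw, by rintro rfl; exact hC1 (by rw [← hw, one_pow])⟩
  have hw1' := sub_ne_zero.2 hw1
  -- `H = c` forces `((H - b) / (H - a)) ^ m = C`, hence `F - a = F - b`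
  obtain ⟨z, hz⟩ := hsurj ((w * a - b) / (w - 1))
  have e1 : H z - a = (a - b) / (w - 1) := by rw [hz]; field_simp; ring
  have e2 : H z - b = w * ((a - b) / (w - 1)) := by rw [hz]; field_simp; ring
  have e3 := hC z
  rw [e1, e2, mul_pow, hw] at e3
  have e4 : C * ((a - b) / (w - 1)) ^ m ≠ 0 :=
    mul_ne_zero hC0 (pow_ne_zero m (div_ne_zero hab' hw1'))
  have e5 : F z - a = F z - b := mul_left_cancel₀ e4 (by linear_combination e3)
  exact hab (by linear_combination -e5)

/-- A function with arbitrarily large scales of regular growth takes every value. -/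
theorem surjective_of_scales {u : ℂ → ℂ} (hu : Differentiable ℂ u)
    (h : ∀ X : ℝ, ∃ ρ L l : ℝ, 1 ≤ ρ ∧ X ≤ L ∧ 0 < l ∧ 1000000 * l ≤ L ∧
      (∀ z, ‖z‖ ≤ 16 * ρ → ‖u z‖ ≤ Real.exp (L + l)) ∧
      ∃ z, ‖z‖ ≤ ρ ∧ Real.exp (L - l) ≤ ‖u z‖) (c : ℂ) : ∃ z, u z = c := by
  obtain ⟨ρ, L, l, hρ, hL, hl, hlL, hbd, z₀, hz₀, hz₀u⟩ := h (2 * (‖c‖ + ‖u 0 - c‖))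
  obtain ⟨t, hst, -, ht⟩ := exists_min_modulus (s := ρ) (B := L + l) (κ := 2 * l) (by linarith)
    (by linarith) hz₀ hu (fun z hz => hbd z (by linarith))
    (by rwa [show L + l - 2 * l = L - l by ring])
  obtain ⟨z, -, hz⟩ := exists_zero_in_ball (u := fun z => u z - c) (hu.sub_const c) (t := t)
    (m := Real.exp (L / 2) - ‖c‖) (by linarith) (fun z hz => by
      have h1 := ht z hz
      have h2 : Real.exp (L / 2) ≤ Real.exp (L + l - 30 * (2 * l)) :=
        Real.exp_le_exp.2 (by linarith)
      have h3 := norm_sub_norm_le (u z) c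
      linarith) (by
      have := Real.add_one_le_exp (L / 2)
      linarith)
  exact ⟨z, sub_eq_zero.1 hz⟩

theorem norm_auxNum_le {F H : ℂ → ℂ} {a b z : ℂ} {m : ℕ} (hm : m ≤ 8) {L l : ℝ}
    (hl : 100 ≤ Real.exp l)
    (h0 : ‖F z - H z‖ ≤ Real.exp (L + 2 * l))
    (h1 : ‖deriv F z‖ ≤ Real.exp (L + l)) (h2 : ‖deriv H z‖ ≤ Real.exp (L + l))
    (hFa : ‖F z - a‖ ≤ Real.exp (L + 2 * l)) (hFb : ‖F z - b‖ ≤ Real.exp (L + 2 * l))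
    (hHa : ‖H z - a‖ ≤ Real.exp (L + 2 * l)) (hHb : ‖H z - b‖ ≤ Real.exp (L + 2 * l)) :
    ‖auxNum a b m F H z‖ ≤ Real.exp (4 * L + 8 * l) := by
  set E := Real.exp (L + 2 * l) with hE
  have hEpos : 0 < E := Real.exp_pos _
  set D := Real.exp (L + l) with hD
  have hDpos : 0 < D := Real.exp_pos _
  have hm' : ‖(m : ℂ)‖ ≤ 8 := by
    rw [Complex.norm_natCast]; exact_mod_cast hm
  have e1 : ‖deriv F z * ((H z - a) * (H z - b))‖ ≤ D * (E * E) := by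
    rw [norm_mul, norm_mul]; gcongr
  have e2 : ‖(m : ℂ) * deriv H z * ((F z - a) * (F z - b))‖ ≤ 8 * D * (E * E) := by
    rw [norm_mul, norm_mul, norm_mul]; gcongr
  calc ‖auxNum a b m F H z‖ ≤ E * (D * (E * E) + 8 * D * (E * E)) := by
        rw [auxNum, norm_mul]
        gcongr
        exact (norm_sub_le _ _).trans (add_le_add e1 e2)
    _ = 9 * (E * (D * (E * E))) := by ring
    _ ≤ Real.exp l * (E * (D * (E * E))) := by gcongr; linarith
    _ = Real.exp (4 * L + 8 * l) := by
        rw [hE, hD, ← Real.exp_add, ← Real.exp_add, ← Real.exp_add, ← Real.exp_add]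
        congr 1
        ring

/-- At a scale at which `F` and `H` both have logarithmic size `L` up to a relative error
`10⁻⁶`, there is a circle on which `lowProd` has size about `exp (524 L)`, while `highProd` has size
at most about `exp (520 L)`. -/
theorem exists_circle_small {F H : ℂ → ℂ} (hF : Differentiable ℂ F) (hH : Differentiable ℂ H)
    {a b : ℂ} {L l ρ : ℝ} (hρ : 1 ≤ ρ) (hlL : 1000000 * l ≤ L)
    (hl : 100 * (1 + ‖a‖ + ‖b‖) ≤ Real.exp l)
    (hFbd : ∀ z, ‖z‖ ≤ 16 * ρ → ‖F z‖ ≤ Real.exp (L + l))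
    (hHbd : ∀ z, ‖z‖ ≤ 16 * ρ → ‖H z‖ ≤ Real.exp (L + l))
    (hFz : ∃ z, ‖z‖ ≤ ρ ∧ Real.exp (L - l) ≤ ‖F z‖)
    (hHz : ∃ z, ‖z‖ ≤ ρ ∧ Real.exp (L - l) ≤ ‖H z‖) :
    ∃ t, 1 ≤ t ∧ ∀ z, ‖z‖ = t → lowProd a b F H z ≠ 0 ∧
      ‖highProd a b F H z‖ ≤ Real.exp (-(2 * L)) * ‖lowProd a b F H z‖ := by
  have na := norm_nonneg a
  have nb := norm_nonneg b
  have hl100 : 100 ≤ Real.exp l := by linarith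
  have hl0 : 0 < l := by
    have : (1 : ℝ) < Real.exp l := by linarith
    simpa using this
  have hstep : ∀ x, 100 * Real.exp x ≤ Real.exp (x + l) := fun x => by
    rw [Real.exp_add, mul_comm]
    gcongr
  have hcmp : ∀ x, l ≤ x → 100 * (1 + ‖a‖ + ‖b‖) ≤ Real.exp x := fun x hx =>
    hl.trans (Real.exp_le_exp.2 hx)
  have hup : ∀ (u c : ℂ), ‖c‖ ≤ ‖a‖ + ‖b‖ → ‖u‖ ≤ Real.exp (L + l) →
      ‖u - c‖ ≤ Real.exp (L + 2 * l) := by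
    intro u c hc hu
    have h1 := hstep (L + l)
    have := hcmp (L + l) (by linarith)
    have := norm_sub_le u c
    rw [show L + l + l = L + 2 * l by ring] at h1
    linarith
  have hlow : ∀ (u c : ℂ), ‖c‖ ≤ ‖a‖ + ‖b‖ → Real.exp (L - 59 * l) ≤ ‖u‖ →
      Real.exp (L - 60 * l) ≤ ‖u - c‖ := by
    intro u c hc hu
    have h1 := hstep (L - 60 * l)
    have h2 := hcmp (L - 60 * l) (by linarith)
    have h3 := norm_sub_norm_le u c
    rw [show L - 60 * l + l = L - 59 * l by ring] at h1
    linarith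
  have hca : ‖a‖ ≤ ‖a‖ + ‖b‖ := by linarith
  have hcb : ‖b‖ ≤ ‖a‖ + ‖b‖ := by linarith
  -- a point at which both functions are large
  obtain ⟨z₀, hz₀, hFz₀⟩ := hFz
  obtain ⟨t₁, hst₁, ht₁s, ht₁⟩ := exists_min_modulus (s := ρ) (B := L + l) (κ := 2 * l)
    (by linarith) (by linarith) hz₀ hF (fun z hz => hFbd z (by linarith))
    (by rwa [show L + l - 2 * l = L - l by ring])
  obtain ⟨z₂, hz₂, hHz₂⟩ : ∃ z, ‖z‖ = t₁ ∧ Real.exp (L - l) ≤ ‖H z‖ := by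
    obtain ⟨z₁, hz₁, hHz₁⟩ := hHz
    have ht₁0 : 0 < t₁ := by linarith
    obtain ⟨z₂, hz₂, hmax⟩ := Complex.exists_mem_frontier_isMaxOn_norm (f := H)
      (Metric.isBounded_ball (x := 0) (r := t₁)) ⟨0, Metric.mem_ball_self ht₁0⟩ hH.diffContOnCl
    rw [frontier_ball _ ht₁0.ne', mem_sphere_zero_iff_norm] at hz₂
    refine ⟨z₂, hz₂, hHz₁.trans (hmax ?_)⟩
    rw [closure_ball _ ht₁0.ne', mem_closedBall_zero_iff]
    linarith
  have hFz₂ : Real.exp (L - 59 * l) ≤ ‖F z₂‖ := by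
    have := ht₁ z₂ hz₂
    rwa [show L + l - 30 * (2 * l) = L - 59 * l by ring] at this
  have hHz₂' : Real.exp (L - 59 * l) ≤ ‖H z₂‖ :=
    (Real.exp_le_exp.2 (by linarith)).trans hHz₂
  have hquad : ∀ x, Real.exp (4 * x) = Real.exp x * Real.exp x * (Real.exp x * Real.exp x) := by
    intro x
    rw [← Real.exp_add, ← Real.exp_add]
    congr 1
    ring
  obtain ⟨t, hst, hts, ht⟩ := exists_min_modulus (s := 2 * ρ) (B := 4 * (L + 2 * l))
    (κ := 248 * l) (by linarith) (by linarith) (z₀ := z₂) (by linarith)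
    (u := fun z => (F z - a) * (F z - b) * ((H z - a) * (H z - b))) (by fun_prop)
    (fun z hz => by
      have h1 := hFbd z (by linarith)
      have h2 := hHbd z (by linarith)
      rw [norm_mul, norm_mul, norm_mul, hquad]
      gcongr
      exacts [hup _ _ hca h1, hup _ _ hcb h1, hup _ _ hca h2, hup _ _ hcb h2])
    (by
      rw [norm_mul, norm_mul, norm_mul,
        show 4 * (L + 2 * l) - 248 * l = 4 * (L - 60 * l) by ring, hquad]
      gcongr
      exacts [hlow _ _ hca hFz₂, hlow _ _ hcb hFz₂, hlow _ _ hca hHz₂', hlow _ _ hcb hHz₂'])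
  refine ⟨t, by linarith, fun z hz => ?_⟩
  have hQ := ht z hz
  have hFz := hFbd z (by linarith)
  have hHz := hHbd z (by linarith)
  have hFa := hup _ _ hca hFz
  have hFb := hup _ _ hcb hFz
  have hHa := hup _ _ hca hHz
  have hHb := hup _ _ hcb hHz
  rw [norm_mul, show 4 * (L + 2 * l) - 30 * (248 * l) = 4 * L - 7432 * l by ring] at hQ
  have hHab : ‖(H z - a) * (H z - b)‖ ≤ Real.exp (2 * L + 4 * l) := by
    rw [norm_mul, show 2 * L + 4 * l = (L + 2 * l) + (L + 2 * l) by ring, Real.exp_add]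
    gcongr
  have hFab : Real.exp (2 * L - 7436 * l) ≤ ‖(F z - a) * (F z - b)‖ := by
    refine le_of_mul_le_mul_right ?_ (Real.exp_pos (2 * L + 4 * l))
    rw [← Real.exp_add, show 2 * L - 7436 * l + (2 * L + 4 * l) = 4 * L - 7432 * l by ring]
    exact hQ.trans (by gcongr)
  have hU : Real.exp (524 * L - 1003352 * l) ≤ ‖lowProd a b F H z‖ := by
    have e1 : lowProd a b F H z = ((F z - a) * (F z - b) * ((H z - a) * (H z - b))) ^ 127 *
        ((F z - a) * (F z - b)) ^ 8 := by
      rw [lowProd, mul_pow _ ((H z - a) * (H z - b)), mul_right_comm, ← pow_add]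
    rw [e1, norm_mul, norm_pow, norm_pow, norm_mul]
    calc Real.exp (524 * L - 1003352 * l) =
        Real.exp (4 * L - 7432 * l) ^ 127 * Real.exp (2 * L - 7436 * l) ^ 8 := by
          rw [← Real.exp_nat_mul, ← Real.exp_nat_mul, ← Real.exp_add]
          congr 1
          push_cast
          ring
      _ ≤ _ := by gcongr
  refine ⟨norm_pos_iff.1 ((Real.exp_pos _).trans_le hU), ?_⟩
  have hder : ∀ u : ℂ → ℂ, Differentiable ℂ u →
      (∀ z, ‖z‖ ≤ 16 * ρ → ‖u z‖ ≤ Real.exp (L + l)) → ‖deriv u z‖ ≤ Real.exp (L + l) := by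
    intro u hu hub
    have := norm_deriv_le_of_bound hu (R := 4 * ρ) (r := 1) one_pos
      (fun w hw => hub w (by linarith)) (z := z) (by linarith)
    rwa [div_one] at this
  have hFH : ∀ u v : ℂ, ‖u‖ ≤ Real.exp (L + l) → ‖v‖ ≤ Real.exp (L + l) →
      ‖u - v‖ ≤ Real.exp (L + 2 * l) := by
    intro u v h1 h2
    have h3 := hstep (L + l)
    rw [show L + l + l = L + 2 * l by ring] at h3
    have := norm_sub_le u v
    have := Real.exp_pos (L + l)
    linarith
  have hV : ‖highProd a b F H z‖ ≤ Real.exp (520 * L + 1032 * l) := by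
    rw [highProd, norm_mul, norm_pow, norm_pow, norm_prod]
    have e1 : ∏ m ∈ Finset.Icc 1 8, ‖auxNum a b m F H z * auxNum a b m H F z‖ ≤
        Real.exp (8 * L + 16 * l) ^ 8 := by
      refine (Finset.prod_le_prod (g := fun _ => Real.exp (8 * L + 16 * l))
        (fun _ _ => norm_nonneg _) fun m hm => ?_).trans_eq (by simp)
      have hm8 := (Finset.mem_Icc.1 hm).2
      rw [norm_mul, show 8 * L + 16 * l = (4 * L + 8 * l) + (4 * L + 8 * l) by ring, Real.exp_add]
      gcongr
      · exact norm_auxNum_le hm8 hl100 (hFH _ _ hFz hHz) (hder F hF hFbd) (hder H hH hHbd)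
          hFa hFb hHa hHb
      · exact norm_auxNum_le hm8 hl100 (hFH _ _ hHz hFz) (hder H hH hHbd) (hder F hF hFbd)
          hHa hHb hFa hFb
    calc _ ≤ Real.exp (L + l) ^ 8 * (Real.exp (8 * L + 16 * l) ^ 8) ^ 8 := by
          gcongr
          exact hder F hF hFbd
      _ = Real.exp (520 * L + 1032 * l) := by
          rw [← pow_mul, ← Real.exp_nat_mul, ← Real.exp_nat_mul, ← Real.exp_add]
          congr 1
          push_cast
          ring
  calc _ ≤ Real.exp (520 * L + 1032 * l) := hV
    _ ≤ Real.exp (-(2 * L)) * Real.exp (524 * L - 1003352 * l) := by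
        rw [← Real.exp_add]
        exact Real.exp_le_exp.2 (by linarith)
    _ ≤ _ := by gcongr

/-! ### Comparable size, regular scales and the conclusion -/

theorem eventually_nhdsNE_ne_zero {u : ℂ → ℂ} (hu : Differentiable ℂ u) (hu0 : u ≠ 0) (z : ℂ) :
    ∀ᶠ x in 𝓝[≠] z, u x ≠ 0 := by
  rcases (hu.analyticAt z).eventually_eq_zero_or_eventually_ne_zero with h | h
  · exact absurd (eq_zero_of_eventually hu h) hu0
  · exact h

/-- Two entire functions sharing `a` and `b` IM and having logarithmic size close to a common
`L` at arbitrarily large scales are equal: otherwise `highProd / lowProd` is an entire function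
which is not identically zero and is arbitrarily small on large circles. -/
theorem eq_of_scales {F H : ℂ → ℂ} (hF : Differentiable ℂ F) (hH : Differentiable ℂ H)
    {a b : ℂ} (hab : a ≠ b) (ha : ∀ z, F z = a ↔ H z = a) (hb : ∀ z, F z = b ↔ H z = b)
    (hsc : ∀ X : ℝ, ∃ ρ L l : ℝ, 1 ≤ ρ ∧ X ≤ l ∧ 1000000 * l ≤ L ∧
      (∀ z, ‖z‖ ≤ 16 * ρ → ‖F z‖ ≤ Real.exp (L + l)) ∧
      (∀ z, ‖z‖ ≤ 16 * ρ → ‖H z‖ ≤ Real.exp (L + l)) ∧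
      (∃ z, ‖z‖ ≤ ρ ∧ Real.exp (L - l) ≤ ‖F z‖) ∧
      ∃ z, ‖z‖ ≤ ρ ∧ Real.exp (L - l) ≤ ‖H z‖) : F = H := by
  by_contra hFH
  have hsF : ∀ c, ∃ z, F z = c := surjective_of_scales hF fun X => by
    obtain ⟨ρ, L, l, h1, h2, h3, h4, -, h5, -⟩ := hsc (max X 1)
    have := le_max_left X 1
    have := le_max_right X 1
    exact ⟨ρ, L, l, h1, by linarith, by linarith, h3, h4, h5⟩
  have hsH : ∀ c, ∃ z, H z = c := surjective_of_scales hH fun X => by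
    obtain ⟨ρ, L, l, h1, h2, h3, -, h4, -, h5⟩ := hsc (max X 1)
    have := le_max_left X 1
    have := le_max_right X 1
    exact ⟨ρ, L, l, h1, by linarith, by linarith, h3, h4, h5⟩
  have hne : ∀ u : ℂ → ℂ, (∀ c, ∃ z, u z = c) → ∀ c, (fun z => u z - c) ≠ 0 := by
    intro u hu c h
    obtain ⟨z, hz⟩ := hu (c + 1)
    have := congrFun h z
    simp [hz] at this
  have hcirc : ∀ X : ℝ, ∃ t L : ℝ, 1 ≤ t ∧ X ≤ L ∧ ∀ z, ‖z‖ = t → lowProd a b F H z ≠ 0 ∧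
      ‖highProd a b F H z‖ ≤ Real.exp (-(2 * L)) * ‖lowProd a b F H z‖ := by
    intro X
    obtain ⟨ρ, L, l, h1, h2, h3, h4, h5, h6, h7⟩ := hsc (max X (100 * (1 + ‖a‖ + ‖b‖)))
    have h8 := le_max_left X (100 * (1 + ‖a‖ + ‖b‖))
    have h9 := le_max_right X (100 * (1 + ‖a‖ + ‖b‖))
    have na := norm_nonneg a
    have nb := norm_nonneg b
    obtain ⟨t, ht, hz⟩ := exists_circle_small (a := a) (b := b) hF hH h1 h3
      (by linarith [Real.add_one_le_exp l]) h4 h5 h6 h7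
    exact ⟨t, L, ht, by linarith, hz⟩
  have hU : lowProd a b F H ≠ 0 := by
    obtain ⟨t, L, ht, -, hz⟩ := hcirc 0
    intro h
    refine (hz (t : ℂ) ?_).1 (congrFun h _)
    rw [Complex.norm_real, Real.norm_eq_abs, abs_of_pos (by linarith)]
  obtain ⟨ψ, hψ, hψe⟩ := exists_entire_quotient_prod hF hH hab (hne F hsF a) (hne H hsH a)
    (hne F hsF b) (hne H hsH b) hU ha hb
  -- the quotient is arbitrarily small on large circles, hence vanishes near `0`
  have hψ0 : ∀ z, ‖z‖ < 1 → ψ z = 0 := by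
    intro z hz
    by_contra hne0
    have hpos := norm_pos_iff.2 hne0
    obtain ⟨t, L, ht, hL, hct⟩ := hcirc (max 0 ‖ψ z‖⁻¹)
    have hL0 := (le_max_left _ _).trans hL
    have hL1 := (le_max_right _ _).trans hL
    have ht0 : 0 < t := by linarith
    have h1 := Complex.norm_le_of_forall_mem_frontier_norm_le (f := ψ) (C := Real.exp (-(2 * L)))
      (Metric.isBounded_ball (x := 0) (r := t)) hψ.diffContOnCl (fun w hw => by
        rw [frontier_ball _ ht0.ne', mem_sphere_zero_iff_norm] at hw
        obtain ⟨h1, h2⟩ := hct w hw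
        rw [hψe w, norm_mul, mul_comm] at h2
        exact le_of_mul_le_mul_right h2 (norm_pos_iff.2 h1)) (z := z)
      (subset_closure (by rw [mem_ball_zero_iff]; linarith))
    rw [Real.exp_neg, le_inv_comm₀ hpos (Real.exp_pos _)] at h1
    linarith [Real.add_one_le_exp (2 * L)]
  have hF' : deriv F ≠ 0 := by
    intro h
    obtain ⟨z, hz⟩ := hsF (F 0 + 1)
    have := is_const_of_deriv_eq_zero hF (fun x => congrFun h x) z 0
    rw [hz] at this
    simp at this
  have hV : ∀ᶠ x in 𝓝[≠] (0 : ℂ), highProd a b F H x ≠ 0 := by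
    have h1 : ∀ᶠ x in 𝓝[≠] (0 : ℂ), ∀ m ∈ Finset.Icc 1 8,
        auxNum a b m F H x * auxNum a b m H F x ≠ 0 := by
      refine (Finset.eventually_all _).2 fun m hm => ?_
      have hm0 : 0 < m := (Finset.mem_Icc.1 hm).1
      filter_upwards [eventually_nhdsNE_ne_zero (differentiable_auxNum a b m hF hH)
        (auxNum_ne_zero hF hH hab ha hb hFH hsH hm0) 0,
        eventually_nhdsNE_ne_zero (differentiable_auxNum a b m hH hF)
        (auxNum_ne_zero hH hF hab (fun z => (ha z).symm) (fun z => (hb z).symm)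
          (Ne.symm hFH) hsF hm0) 0] with x h1 h2
      exact mul_ne_zero h1 h2
    filter_upwards [h1, eventually_nhdsNE_ne_zero hF.deriv hF' 0] with x h1 h2
    exact mul_ne_zero (pow_ne_zero _ h2) (pow_ne_zero _ (Finset.prod_ne_zero_iff.2 h1))
  obtain ⟨x, hx, hx1⟩ := (hV.and (nhdsWithin_le_nhds (Metric.ball_mem_nhds (0 : ℂ) one_pos))).exists
  rw [hψe x, hψ0 x (by simpa using hx1), mul_zero] at hx
  exact hx rfl

theorem norm_le_maxMod {f : ℂ → ℂ} (hf : Differentiable ℂ f) {r : ℝ} (hr : 0 < r) {z : ℂ}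
    (hz : ‖z‖ ≤ r) : ‖f z‖ ≤ maxMod f r := by
  refine Complex.norm_le_of_forall_mem_frontier_norm_le (f := f)
    (Metric.isBounded_ball (x := 0) (r := r)) hf.diffContOnCl (fun w hw => ?_) (z := z)
    (by rw [closure_ball _ hr.ne', mem_closedBall_zero_iff]; exact hz)
  rw [frontier_ball _ hr.ne'] at hw
  exact le_csSup ((isCompact_sphere 0 r).image hf.continuous.norm).bddAbove ⟨w, hw, rfl⟩

theorem exists_norm_eq_maxMod {f : ℂ → ℂ} (hf : Differentiable ℂ f) {r : ℝ} (hr : 0 < r) :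
    ∃ z, ‖z‖ = r ∧ ‖f z‖ = maxMod f r := by
  obtain ⟨z, hz, h⟩ := ((isCompact_sphere (0 : ℂ) r).image hf.continuous.norm).sSup_mem
    ((NormedSpace.sphere_nonempty.2 hr.le).image _)
  exact ⟨z, by simpa using hz, h⟩

/-- Liouville's theorem in terms of the maximum modulus. -/
theorem eventually_le_log_maxMod {f : ℂ → ℂ} (hf : Differentiable ℂ f)
    (hnc : ¬∃ c : ℂ, ∀ z : ℂ, f z = c) (X : ℝ) : ∀ᶠ r in atTop, X ≤ Real.log (maxMod f r) := by
  have h : ∃ z, Real.exp X ≤ ‖f z‖ := by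
    by_contra! hb
    refine hnc ⟨f 0, fun z => hf.apply_eq_apply_of_bounded ?_ z 0⟩
    exact isBounded_iff_forall_norm_le.2 ⟨Real.exp X, by rintro _ ⟨z, rfl⟩; exact (hb z).le⟩
  obtain ⟨z, hz⟩ := h
  filter_upwards [eventually_ge_atTop (max 1 ‖z‖)] with r hr
  have h1 := (le_max_left _ _).trans hr
  rw [Real.le_log_iff_exp_le]
  · exact hz.trans (norm_le_maxMod hf (by linarith) ((le_max_right _ _).trans hr))
  · exact (Real.exp_pos X).trans_le
      (hz.trans (norm_le_maxMod hf (by linarith) ((le_max_right _ _).trans hr)))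

/-- Zero order means `log M r ≤ r ^ ε` for large `r`. -/
theorem eventually_log_maxMod_le {f : ℂ → ℂ} (hf : ZeroOrderEntire f) {ε : ℝ} (hε : 0 < ε) :
    ∀ᶠ r in atTop, Real.log (maxMod f r) ≤ Real.exp (ε * Real.log r) := by
  have h : ∀ᶠ r : ℝ in atTop,
      ((logPlus (logPlus (maxMod f r)) / Real.log r : ℝ) : EReal) < (ε : ℝ) :=
    eventually_lt_of_limsup_lt (by rw [hf.2]; exact_mod_cast hε)
  filter_upwards [h, eventually_gt_atTop 1] with r hr hr1
  rw [EReal.coe_lt_coe_iff, div_lt_iff₀ (Real.log_pos hr1)] at hr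
  by_cases hp : Real.log (maxMod f r) ≤ 0
  · exact hp.trans (Real.exp_pos _).le
  · push Not at hp
    rw [← Real.log_le_iff_le_exp hp]
    refine le_trans ?_ hr.le
    rw [logPlus, logPlus, max_eq_right hp.le]
    exact le_max_right _ _

/-- A non-constant entire function of zero order has arbitrarily large scales at which
`log M (A s) ≤ (1 + ε) log M s`. Otherwise `log M (A ^ k s)` would grow like `(1 + ε) ^ k`, which is a positive
power of `A ^ k s`. -/
theorem exists_regular_scale {f : ℂ → ℂ} (hf : ZeroOrderEntire f)
    (hnc : ¬∃ c : ℂ, ∀ z : ℂ, f z = c) {A ε : ℝ} (hA : 1 < A) (hε : 0 < ε) (X : ℝ) :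
    ∃ s, 1 ≤ s ∧ X ≤ Real.log (maxMod f s) ∧
      Real.log (maxMod f (A * s)) ≤ (1 + ε) * Real.log (maxMod f s) := by
  by_contra! hcon
  have hlA := Real.log_pos hA
  have hc : 0 < Real.log (1 + ε) := Real.log_pos (by linarith)
  set e' := Real.log (1 + ε) / (2 * Real.log A) with he'
  have he'0 : 0 < e' := by positivity
  obtain ⟨R, hR⟩ := eventually_atTop.1 ((eventually_le_log_maxMod hf.1 hnc (max X 1)).and
    (eventually_log_maxMod_le hf he'0))
  set s₀ := max R 1 with hs₀
  have hs1 : 1 ≤ s₀ := le_max_right _ _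
  have hAk : ∀ k : ℕ, s₀ ≤ A ^ k * s₀ := fun k =>
    le_mul_of_one_le_left (by linarith) (one_le_pow₀ hA.le)
  have hgrow : ∀ k : ℕ, (1 + ε) ^ k ≤ Real.log (maxMod f (A ^ k * s₀)) := by
    intro k
    induction k with
    | zero => simpa using (le_max_right X 1).trans (hR s₀ (le_max_left _ _)).1
    | succ k ih =>
      have h1 := hcon (A ^ k * s₀) (hs1.trans (hAk k))
        ((le_max_left X 1).trans (hR _ ((le_max_left _ _).trans (hAk k))).1)
      rw [← mul_assoc, ← pow_succ'] at h1
      rw [pow_succ']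
      exact (mul_le_mul_of_nonneg_left ih (by linarith)).trans h1.le
  obtain ⟨k, hk⟩ := exists_nat_gt (e' * Real.log s₀ / (Real.log (1 + ε) / 2))
  rw [div_lt_iff₀ (by positivity)] at hk
  have h1 := (hgrow k).trans (hR _ ((le_max_left _ _).trans (hAk k))).2
  rw [← Real.exp_log (show 0 < 1 + ε by linarith), ← Real.exp_nat_mul, Real.exp_le_exp,
    Real.log_mul (by positivity) (by positivity), Real.log_pow, mul_add] at h1
  have h2 : e' * (k * Real.log A) = k * (Real.log (1 + ε) / 2) := by
    rw [he']; field_simp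
  linarith

/-- **Corollary 1.** There is no non-constant entire function `f` of zero order such that
`f` and `Δ_{q,η} f` share the pairs `(a₁, -a₁)` and `(b₁, -b₁)` IM, where `a₁ ≠ b₁`. -/
theorem no_entire_sharing_opposite_pairs
    (q η : ℂ) (hq : q ≠ 0) (a₁ b₁ : ℂ) (hab : a₁ ≠ b₁) :
    ¬∃ f : ℂ → ℂ, ZeroOrderEntire f ∧ (¬∃ c : ℂ, ∀ z : ℂ, f z = c) ∧
      {z : ℂ | f z = a₁} = {z : ℂ | f (q * z + η) - f z = -a₁} ∧
      {z : ℂ | f z = b₁} = {z : ℂ | f (q * z + η) - f z = -b₁} := by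
  rintro ⟨f, hf, hnc, ha, hb⟩
  have hfd := hf.1
  have hshare : ∀ c : ℂ, {z : ℂ | f z = c} = {z : ℂ | f (q * z + η) - f z = -c} →
      ∀ z, f z = c ↔ f z - f (q * z + η) = c := by
    intro c h z
    rw [show f z = c ↔ f (q * z + η) - f z = -c from Set.ext_iff.1 h z]
    constructor <;> intro h <;> linear_combination -h
  have ha' := hshare a₁ ha
  have hb' := hshare b₁ hb
  have hHd : Differentiable ℂ (fun z => f z - f (q * z + η)) := by fun_prop
  have key : f = fun z => f z - f (q * z + η) := by
    refine eq_of_scales hfd hHd hab ha' hb' fun X => ?_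
    set Y := max X (100 * (1 + ‖a₁‖ + ‖b₁‖ + ‖f 0 - a₁‖)) with hY
    have hXY : X ≤ Y := le_max_left _ _
    have hY2 : 100 * (1 + ‖a₁‖ + ‖b₁‖ + ‖f 0 - a₁‖) ≤ Y := le_max_right _ _
    have hY1 : 100 ≤ Y := by
      linarith [norm_nonneg a₁, norm_nonneg b₁, norm_nonneg (f 0 - a₁)]
    have nq := norm_nonneg q
    have nη := norm_nonneg η
    obtain ⟨s, hs, hXs, hreg⟩ := exists_regular_scale hf hnc (A := 32 * (‖q‖ + 1) + ‖η‖)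
      (ε := 1 / 300000000) (by linarith) (by norm_num) (300000000 * Y)
    set L := Real.log (maxMod f s) with hL
    set A := 32 * (‖q‖ + 1) + ‖η‖ with hA
    have hs0 : 0 < s := by linarith
    have hAs : 0 < A * s := by positivity
    obtain ⟨z₀, hz₀, hz₀M⟩ := exists_norm_eq_maxMod hfd hs0
    have hMpos : 0 < maxMod f s := by
      rcases (hz₀M ▸ norm_nonneg (f z₀) : 0 ≤ maxMod f s).lt_or_eq with h | h
      · exact h
      · rw [hL, ← h, Real.log_zero] at hXs
        linarith
    have hfz₀ : Real.exp L = ‖f z₀‖ := by rw [hz₀M, hL, Real.exp_log hMpos]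
    have hsA : s ≤ A * s := le_mul_of_one_le_left hs0.le (by linarith)
    have hbig : ∀ z, ‖z‖ ≤ A * s → ‖f z‖ ≤ Real.exp (L + L / 300000000) := by
      intro z hz
      refine (norm_le_maxMod hfd hAs hz).trans ?_
      rw [← Real.log_le_iff_le_exp]
      · linarith
      · exact hMpos.trans_le (hz₀M ▸ norm_le_maxMod hfd hAs (hz₀.le.trans hsA))
    have h32 : 32 * s ≤ A * s := by gcongr; linarith
    have hbig2 : ∀ z, ‖z‖ ≤ 32 * s → ‖f (q * z + η)‖ ≤ Real.exp (L + L / 300000000) := by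
      intro z hz
      refine hbig _ ?_
      calc ‖q * z + η‖ ≤ ‖q‖ * ‖z‖ + ‖η‖ := (norm_add_le _ _).trans (by rw [norm_mul])
        _ ≤ ‖q‖ * (32 * s) + ‖η‖ * s := by
            gcongr
            exact le_mul_of_one_le_right nη hs
        _ ≤ A * s := by rw [hA]; nlinarith
    refine ⟨2 * s, L, L / 1000000, by linarith, by linarith, by linarith, ?_, ?_, ?_, ?_⟩
    · intro z hz
      refine (hbig z (by linarith)).trans (Real.exp_le_exp.2 (by linarith))
    · intro z hz
      have h1 := hbig z (by linarith)
      have h2 := hbig2 z (by linarith)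
      have h3 : 2 * Real.exp (L + L / 300000000) ≤ Real.exp (L + L / 1000000) := by
        rw [show L + L / 1000000 = 299 * (L / 300000000) + (L + L / 300000000) by ring,
          Real.exp_add (299 * (L / 300000000))]
        refine mul_le_mul_of_nonneg_right ?_ (Real.exp_pos _).le
        linarith [Real.add_one_le_exp (299 * (L / 300000000))]
      linarith [norm_sub_le (f z) (f (q * z + η))]
    · exact ⟨z₀, by linarith, hfz₀ ▸ Real.exp_le_exp.2 (by linarith)⟩
    · by_contra! hsmall
      refine not_small hfd hHd hab (fun z => (ha' z).1) (fun z => (hb' z).1) (L := L)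
        (l := L / 300000000) hs0 (by linarith)
        (by linarith [Real.add_one_le_exp (L / 300000000)])
        (fun z hz => hbig z (by linarith)) hz₀.le hfz₀.le ?_
      intro z hz
      rw [show L - 300 * (L / 300000000) = L - L / 1000000 by ring]
      exact (hsmall z hz).le
  refine hnc ⟨0, fun w => ?_⟩
  have h := congrFun key ((w - η) / q)
  rw [mul_div_cancel₀ _ hq, sub_add_cancel] at h
  linear_combination h
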